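/- Let k ≥ 3, let r_1,…,r_k be fixed positive integers, r = r_1 + ⋯ + r_k, and let {G_i}_{i≥1} be a sequence of finite groups with identity e such that |G_i| → ∞, the exponent of G_i divides r, and gcd(r_j, |G_i|) = 1 for every j ∈ {1,…,k} and every i. Let S_i = {(x_1,…,x_k) ∈ G_i^k : x_1^{r_1}·x_2^{r_2}·…·x_k^{r_k} = e} and set p_i = |G_i|^{−(k−2)/(k−1)}. Then for every δ with 0 < δ ≤ 1/40 there exist constants c₁, c₂ > 0 (depending on δ and k) such that for every sequence p(i) ∈ [0,1]: if p(i) ≥ c₁·p_i for all i then P_{p(i)}({A ⊆ G_i : A is (δ,S_i)_k-stable}) → 1 as i → ∞, and if p(i) < c₂·p_i for all i then P_{p(i)}({A ⊆ G_i : A is (δ,S_i)_k-stable}) → 0 as i → ∞. -/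

import Mathlib

open Finset Filter Topology

attribute [local instance] Classical.propDecidable

/-- The set `S^{(k)}` of tuples of `S` with pairwise distinct entries. -/
noncomputable def distinctPart {k : ℕ} {G : Type} (S : Finset (Fin k → G)) :
    Finset (Fin k → G) :=
  S.filter fun x => Function.Injective x

/-- Probability assigned to a family `E` of subsets of `G` by the binomial random subset
`[G]_p`. -/
noncomputable def binomProb {G : Type} [Fintype G] (p : ℝ) (E : Finset (Finset G)) : ℝ :=
  ∑ A ∈ E, p ^ A.card * (1 - p) ^ (Fintype.card G - A.card)

/-- `X` is `(δ,S)_k`-stable. -/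
def StableK {k : ℕ} {G : Type} (δ : ℝ) (S : Finset (Fin k → G)) (X : Finset G) : Prop :=
  ∀ X' ⊆ X, δ * (X.card : ℝ) ≤ (X'.card : ℝ) →
    (∃ x ∈ S, ∀ j, x j ∈ X') ∧ (∃ x ∈ distinctPart S, ∀ j, x j ∈ X')

/-! Stability is a property of the hypergraph whose edges are the entry sets of the solutions with
distinct entries. As any `k - 1` of the unknowns determine the remaining one, the number of edges
through `t < k` given vertices is `O(n ^ (k - 1 - t))`, where `n = |G|`.

Below the threshold, the second moment method shows that a random set `A` spans fewer than
`(1 - δ) |A|` edges; deleting a vertex from each edge leaves an independent set of size at least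
`δ |A|`.

Above the threshold, a set that is not stable contains a large independent set, and independent sets
lie in few containers. To build these, grow a fingerprint of an independent set `I` by elements of
`I` whose presence makes it much less likely that a `q`-random subset of the remaining candidates is
independent. When no such element is left, an entropy inequality shows that this probability is not
tiny, whereas Janson's inequality makes it tiny on every set with many edges. So the containers have
few edges, hence are small by supersaturation, and a union bound over the fingerprints finishes.

For supersaturation, place `k` copies of `G` on a cycle and join `a` in copy `j` to `a * x ^ r j` in
copy `j + 1` for `x` in a dense set `T`. Solutions in `T` are the closed walks around the cycle.
Because the exponent of `G` divides the sum of the `r j`, each constant sequence `x, …, x` closes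
up. Because `r j` is coprime to `|G|`, distinct constant walks use distinct edges at each step, so
the few edges outside the dense regular pairs of a Szemerédi partition do not destroy all of them. A
surviving walk passes only through dense regular pairs, which yields `Ω(n ^ (k - 1))` closed walks
from a single vertex. -/

/-! ### Binomial random subsets -/

section BinomialSubset

variable {V : Type*} {p : ℝ} {C T : Finset V} {v : V} {F F' : Finset V → ℝ}
  {Q Q' : Finset V → Prop}

/-- The expectation of `F R` for the `p`-random subset `R` of `C`. -/
noncomputable def binomExp (p : ℝ) (C : Finset V) (F : Finset V → ℝ) : ℝ :=
  ∑ R ∈ C.powerset, p ^ #R * (1 - p) ^ (#C - #R) * F R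

/-- The probability of the event `Q R` for the `p`-random subset `R` of `C`. -/
noncomputable def binomPr (p : ℝ) (C : Finset V) (Q : Finset V → Prop) : ℝ :=
  binomExp p C fun R => if Q R then 1 else 0

lemma binomExp_congr (h : ∀ R ⊆ C, F R = F' R) : binomExp p C F = binomExp p C F' :=
  sum_congr rfl fun R hR => by rw [h R (mem_powerset.1 hR)]

lemma binomExp_mono (hp₀ : 0 ≤ p) (hp₁ : p ≤ 1) (h : ∀ R ⊆ C, F R ≤ F' R) :
    binomExp p C F ≤ binomExp p C F' := by
  have : 0 ≤ 1 - p := by linarith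
  exact sum_le_sum fun R hR => mul_le_mul_of_nonneg_left (h R (mem_powerset.1 hR)) (by positivity)

lemma binomExp_insert (hv : v ∉ C) (F : Finset V → ℝ) :
    binomExp p (insert v C) F =
      (1 - p) * binomExp p C F + p * binomExp p C fun R => F (insert v R) := by
  unfold binomExp
  rw [sum_powerset_insert hv, mul_sum, mul_sum]
  congr 1 <;> refine sum_congr rfl fun R hR => ?_
  · have hRC := card_le_card (mem_powerset.1 hR)
    rw [card_insert_of_notMem hv, Nat.sub_add_comm hRC]
    ring
  · have hvR : v ∉ R := fun h => hv (mem_powerset.1 hR h)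
    rw [card_insert_of_notMem hv, card_insert_of_notMem hvR, Nat.add_sub_add_right]
    ring

lemma binomExp_const_mul (c : ℝ) (F : Finset V → ℝ) :
    binomExp p C (fun R => c * F R) = c * binomExp p C F := by
  simp only [binomExp, mul_sum]
  exact sum_congr rfl fun R _ => by ring

lemma binomExp_add (F F' : Finset V → ℝ) :
    binomExp p C (fun R => F R + F' R) = binomExp p C F + binomExp p C F' := by
  simp only [binomExp, mul_add, sum_add_distrib]

lemma binomExp_sum {ι : Type*} (s : Finset ι) (F : ι → Finset V → ℝ) :
    binomExp p C (fun R => ∑ i ∈ s, F i R) = ∑ i ∈ s, binomExp p C (F i) := by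
  simp only [binomExp, mul_sum]
  exact sum_comm

lemma binomExp_prod (p : ℝ) (C : Finset V) (w : V → ℝ) :
    binomExp p C (fun R => ∏ v ∈ R, w v) = ∏ v ∈ C, (1 - p + p * w v) := by
  induction C using Finset.induction_on with
  | empty => simp [binomExp]
  | insert v C hv ih =>
    have hw : binomExp p C (fun R => ∏ u ∈ insert v R, w u) =
        w v * binomExp p C fun R => ∏ u ∈ R, w u := by
      rw [← binomExp_const_mul]
      exact binomExp_congr fun R hR => prod_insert fun h => hv (hR h)
    rw [binomExp_insert hv, hw, prod_insert hv, ih]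
    ring

lemma binomExp_const (p : ℝ) (C : Finset V) (c : ℝ) : binomExp p C (fun _ => c) = c := by
  have hone : binomExp p C (fun _ => 1) = 1 := by simpa using binomExp_prod p C fun _ => 1
  simpa only [mul_one, hone] using binomExp_const_mul (p := p) (C := C) c fun _ => 1

lemma binomPr_congr (h : ∀ R ⊆ C, Q R ↔ Q' R) : binomPr p C Q = binomPr p C Q' :=
  binomExp_congr fun R hR => by simp only [h R hR]

lemma binomPr_insert (hv : v ∉ C) (Q : Finset V → Prop) :
    binomPr p (insert v C) Q =
      (1 - p) * binomPr p C Q + p * binomPr p C fun R => Q (insert v R) :=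
  binomExp_insert hv _

lemma binomPr_and_add_not_and (p : ℝ) (C : Finset V) (Q Q' : Finset V → Prop) :
    binomPr p C (fun R => Q R ∧ Q' R) + binomPr p C (fun R => ¬Q R ∧ Q' R) = binomPr p C Q' := by
  simp only [binomPr, ← binomExp_add]
  exact binomExp_congr fun R _ => by by_cases h : Q R <;> simp [h]

lemma binomPr_add_not (p : ℝ) (C : Finset V) (Q : Finset V → Prop) :
    binomPr p C Q + binomPr p C (fun R => ¬Q R) = 1 := by
  rw [binomPr, binomPr, ← binomExp_add]
  refine Eq.trans ?_ (binomExp_const p C 1)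
  exact binomExp_congr fun R _ => by by_cases h : Q R <;> simp [h]

lemma binomPr_le_binomExp (hp₀ : 0 ≤ p) (hp₁ : p ≤ 1) (hF : ∀ R ⊆ C, 0 ≤ F R)
    (h : ∀ R ⊆ C, Q R → 1 ≤ F R) : binomPr p C Q ≤ binomExp p C F :=
  binomExp_mono hp₀ hp₁ fun R hR => by
    split_ifs with hQ
    exacts [h R hR hQ, hF R hR]

lemma binomPr_mono (hp₀ : 0 ≤ p) (hp₁ : p ≤ 1) (h : ∀ R ⊆ C, Q R → Q' R) :
    binomPr p C Q ≤ binomPr p C Q' :=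
  binomPr_le_binomExp hp₀ hp₁ (fun R _ => by positivity) fun R hR hQ => by simp [h R hR hQ]

lemma binomPr_nonneg (hp₀ : 0 ≤ p) (hp₁ : p ≤ 1) : 0 ≤ binomPr p C Q := by
  rw [← binomExp_const p C 0]
  exact binomExp_mono hp₀ hp₁ fun R _ => by positivity

lemma binomPr_le_one (hp₀ : 0 ≤ p) (hp₁ : p ≤ 1) : binomPr p C Q ≤ 1 := by
  rw [← binomExp_const p C 1]
  exact binomPr_le_binomExp hp₀ hp₁ (fun _ _ => zero_le_one) fun _ _ _ => le_rfl

lemma binomPr_exists_le {ι : Type*} (hp₀ : 0 ≤ p) (hp₁ : p ≤ 1) (s : Finset ι)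
    (Q : ι → Finset V → Prop) :
    binomPr p C (fun R => ∃ i ∈ s, Q i R) ≤ ∑ i ∈ s, binomPr p C (Q i) := by
  simp only [binomPr, ← binomExp_sum]
  refine binomPr_le_binomExp hp₀ hp₁ (fun R _ => by positivity) ?_
  rintro R - ⟨i, hi, hQ⟩
  have := single_le_sum (f := fun i => if Q i R then (1 : ℝ) else 0)
    (fun _ _ => by positivity) hi
  simpa only [hQ, if_true] using this

lemma binomPr_or_le (hp₀ : 0 ≤ p) (hp₁ : p ≤ 1) (Q Q' : Finset V → Prop) :
    binomPr p C (fun R => Q R ∨ Q' R) ≤ binomPr p C Q + binomPr p C Q' := by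
  simp only [binomPr, ← binomExp_add]
  refine binomPr_le_binomExp hp₀ hp₁ (fun R _ => by positivity) fun R _ h => ?_
  rcases h with h | h <;> simp only [h, if_true] <;> split_ifs <;> norm_num

lemma one_sub_pow_le_binomPr (hp₀ : 0 ≤ p) (hp₁ : p ≤ 1) (hQ : Q ∅) :
    (1 - p) ^ #C ≤ binomPr p C Q := by
  have : 0 ≤ 1 - p := by linarith
  have := single_le_sum (f := fun R => p ^ #R * (1 - p) ^ (#C - #R) * if Q R then (1 : ℝ) else 0)
    (fun R _ => by positivity) (empty_mem_powerset C)
  simpa [binomPr, binomExp, hQ] using this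

lemma binomPr_union_le_of_antitone (hp₀ : 0 ≤ p) (hp₁ : p ≤ 1) (hCT : Disjoint C T)
    (hQ : Antitone Q) : binomPr p (C ∪ T) Q ≤ binomPr p C Q := by
  induction T using Finset.induction_on with
  | empty => rw [union_empty]
  | insert v T hv ih =>
    rw [disjoint_insert_right] at hCT
    rw [union_insert, binomPr_insert (by simp [hCT.1, hv])]
    have hins : binomPr p (C ∪ T) (fun R => Q (insert v R)) ≤ binomPr p (C ∪ T) Q :=
      binomPr_mono hp₀ hp₁ fun R _ => hQ (subset_insert v R)
    nlinarith [ih hCT.2]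

lemma binomPr_le_binomPr_union_of_antitone (hp₀ : 0 ≤ p) (hp₁ : p ≤ 1) (hCT : Disjoint C T)
    (hQ : Antitone Q) : binomPr p C (fun R => Q (R ∪ T)) ≤ binomPr p (C ∪ T) Q := by
  induction T using Finset.induction_on generalizing Q with
  | empty => simp
  | insert v T hv ih =>
    rw [disjoint_insert_right] at hCT
    simp only [union_insert]
    rw [binomPr_insert (by simp [hCT.1, hv])]
    have hins : binomPr p (C ∪ T) (fun R => Q (insert v R)) ≤ binomPr p (C ∪ T) Q :=
      binomPr_mono hp₀ hp₁ fun R _ => hQ (subset_insert v R)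
    have := ih hCT.2 (Q := fun R => Q (insert v R)) fun A B h => hQ (insert_subset_insert v h)
    nlinarith

lemma binomPr_union_superset (hCT : Disjoint C T) (Q : Finset V → Prop) :
    binomPr p (C ∪ T) (fun R => T ⊆ R ∧ Q R) =
      p ^ #T * binomPr p C fun R => Q (R ∪ T) := by
  induction T using Finset.induction_on generalizing Q with
  | empty => simp
  | insert v T hv ih =>
    rw [disjoint_insert_right] at hCT
    have hvCT : v ∉ C ∪ T := by simp [hCT.1, hv]
    have hzero : binomPr p (C ∪ T) (fun R => insert v T ⊆ R ∧ Q R) = 0 := by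
      rw [← binomExp_const p (C ∪ T) 0]
      exact binomExp_congr fun R hR =>
        if_neg fun h => hvCT (hR (h.1 (mem_insert_self v T)))
    rw [union_insert, binomPr_insert hvCT, hzero, card_insert_of_notMem hv]
    simp only [insert_subset_insert_iff hv, union_insert]
    rw [ih hCT.2]
    ring

lemma binomPr_superset (hT : T ⊆ C) (Q : Finset V → Prop) :
    binomPr p C (fun R => T ⊆ R ∧ Q R) = p ^ #T * binomPr p (C \ T) fun R => Q (R ∪ T) := by
  rw [← binomPr_union_superset sdiff_disjoint, sdiff_union_of_subset hT]

lemma binomPr_subset (hT : T ⊆ C) : binomPr p C (fun R => T ⊆ R) = p ^ #T := by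
  have htrue : binomPr p (C \ T) (fun _ => True) = 1 := by
    simp only [binomPr, if_true, binomExp_const]
  simpa only [and_true, htrue, mul_one] using binomPr_superset (p := p) hT fun _ => True

/-- Harris' inequality for an up-set generated by one set and a down-set. -/
lemma binomPr_superset_le_of_antitone (hp₀ : 0 ≤ p) (hp₁ : p ≤ 1) (hT : T ⊆ C)
    (hQ : Antitone Q) :
    binomPr p C (fun R => T ⊆ R ∧ Q R) ≤ p ^ #T * binomPr p C Q := by
  have := binomPr_le_binomPr_union_of_antitone hp₀ hp₁ sdiff_disjoint (C := C \ T) (T := T) hQ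
  rw [sdiff_union_of_subset hT] at this
  rw [binomPr_superset hT]
  exact mul_le_mul_of_nonneg_left this (by positivity)

lemma le_binomPr_superset_of_antitone (hp₀ : 0 ≤ p) (hp₁ : p ≤ 1) (hT : T ⊆ C)
    (hQ : Antitone Q) (hQT : ∀ R, Q (R ∪ T) ↔ Q R) :
    p ^ #T * binomPr p C Q ≤ binomPr p C fun R => T ⊆ R ∧ Q R := by
  have := binomPr_union_le_of_antitone hp₀ hp₁ sdiff_disjoint (C := C \ T) (T := T) hQ
  rw [sdiff_union_of_subset hT] at this
  simp only [binomPr_superset hT, hQT]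
  exact mul_le_mul_of_nonneg_left this (by positivity)

end BinomialSubset

/-! ### Janson's inequality -/

section Janson

variable {V : Type*} {p : ℝ} {C : Finset V} {J : Finset (Finset V)} {E : Finset V}

/-- `R` is an independent set of the hypergraph with edge set `J`. -/
def EdgeFree (J : Finset (Finset V)) (R : Finset V) : Prop :=
  ∀ E ∈ J, ¬E ⊆ R

lemma edgeFree_antitone (J : Finset (Finset V)) : Antitone (EdgeFree J) :=
  fun _ _ hAB hB E hE hEA => hB E hE (hEA.trans hAB)

/-- The correlation term of Janson's inequality: the sum of `ℙ(E ∪ E' ⊆ R)` over ordered pairs of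
distinct intersecting edges. -/
noncomputable def overlapSum (p : ℝ) (J : Finset (Finset V)) : ℝ :=
  ∑ E ∈ J, ∑ E' ∈ J with E' ≠ E ∧ ¬Disjoint E E', p ^ #(E ∪ E')

-- Replace `J` by the edges disjoint from `E`: their absence is independent of `E ⊆ R`, and by
-- Harris' inequality the remaining edges cost at most the sum that is subtracted.
lemma le_binomPr_superset_edgeFree (hp₀ : 0 ≤ p) (hp₁ : p ≤ 1) (hE : E ⊆ C)
    (hJ : ∀ E' ∈ J, E' ⊆ C) :
    (p ^ #E - ∑ E' ∈ J with ¬Disjoint E E', p ^ #(E ∪ E')) * binomPr p C (EdgeFree J) ≤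
      binomPr p C fun R => E ⊆ R ∧ EdgeFree J R := by
  set N := J.filter fun E' => ¬Disjoint E E'
  set J₀ := J.filter fun E' => Disjoint E E'
  have hdisj (R : Finset V) : EdgeFree J₀ (R ∪ E) ↔ EdgeFree J₀ R :=
    forall₂_congr fun E' hE' => not_congr
      ⟨(mem_filter.1 hE').2.symm.left_le_of_le_sup_right, fun h => h.trans subset_union_left⟩
  have hsplit : binomPr p C (fun R => E ⊆ R ∧ EdgeFree J₀ R) ≤
      binomPr p C (fun R => E ⊆ R ∧ EdgeFree J R) +
        ∑ E' ∈ N, binomPr p C fun R => E ∪ E' ⊆ R ∧ EdgeFree J₀ R := by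
    refine (binomPr_mono hp₀ hp₁ ?_).trans ((binomPr_or_le hp₀ hp₁ _ _).trans
      (add_le_add_right (binomPr_exists_le hp₀ hp₁ N _) _))
    rintro R - ⟨hER, hR⟩
    by_cases hfree : EdgeFree J R
    · exact Or.inl ⟨hER, hfree⟩
    · simp only [EdgeFree, not_forall, not_not] at hfree
      obtain ⟨E', hE', hE'R⟩ := hfree
      refine Or.inr ⟨E', mem_filter.2 ⟨hE', fun h => ?_⟩, union_subset hER hE'R, hR⟩
      exact hR E' (mem_filter.2 ⟨hE', h⟩) hE'R
  have hindep := le_binomPr_superset_of_antitone hp₀ hp₁ hE (edgeFree_antitone J₀) hdisj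
  have hharris : ∑ E' ∈ N, binomPr p C (fun R => E ∪ E' ⊆ R ∧ EdgeFree J₀ R) ≤
      (∑ E' ∈ N, p ^ #(E ∪ E')) * binomPr p C (EdgeFree J₀) := by
    rw [sum_mul]
    exact sum_le_sum fun E' hE' => binomPr_superset_le_of_antitone hp₀ hp₁
      (union_subset hE (hJ E' (mem_filter.1 hE').1)) (edgeFree_antitone J₀)
  have hmono : binomPr p C (EdgeFree J) ≤ binomPr p C (EdgeFree J₀) :=
    binomPr_mono hp₀ hp₁ fun R _ h E' hE' => h E' (mem_filter.1 hE').1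
  rcases le_total 0 (p ^ #E - ∑ E' ∈ N, p ^ #(E ∪ E')) with h | h
  · linarith [mul_le_mul_of_nonneg_left hmono h]
  · exact (mul_nonpos_of_nonpos_of_nonneg h (binomPr_nonneg hp₀ hp₁)).trans
      (binomPr_nonneg hp₀ hp₁)

lemma binomPr_edgeFree_insert_le (hp₀ : 0 ≤ p) (hp₁ : p ≤ 1) (hE : E ⊆ C)
    (hJ : ∀ E' ∈ J, E' ⊆ C) :
    binomPr p C (EdgeFree (insert E J)) ≤
      Real.exp (-p ^ #E + ∑ E' ∈ J with ¬Disjoint E E', p ^ #(E ∪ E')) *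
        binomPr p C (EdgeFree J) := by
  have hinsert : binomPr p C (EdgeFree (insert E J)) =
      binomPr p C fun R => ¬E ⊆ R ∧ EdgeFree J R :=
    binomPr_congr fun R _ => forall_mem_insert _ _ _
  have hsplit := binomPr_and_add_not_and p C (fun R => E ⊆ R) (EdgeFree J)
  have hstep := le_binomPr_superset_edgeFree hp₀ hp₁ hE hJ
  have hexp := mul_le_mul_of_nonneg_right
    (Real.add_one_le_exp (-p ^ #E + ∑ E' ∈ J with ¬Disjoint E E', p ^ #(E ∪ E')))
    (binomPr_nonneg hp₀ hp₁ (C := C) (Q := EdgeFree J))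
  linarith

lemma add_overlapSum_le_overlapSum_insert (hp₀ : 0 ≤ p) (hE : E ∉ J) :
    (∑ E' ∈ J with ¬Disjoint E E', p ^ #(E ∪ E')) + overlapSum p J ≤
      overlapSum p (insert E J) := by
  rw [overlapSum, overlapSum, sum_insert hE]
  refine add_le_add (sum_le_sum_of_subset_of_nonneg ?_ fun _ _ _ => by positivity)
    (sum_le_sum fun E₁ _ => sum_le_sum_of_subset_of_nonneg
      (filter_subset_filter _ (subset_insert _ _)) fun _ _ _ => by positivity)
  intro E' hE'
  rw [mem_filter] at hE' ⊢
  exact ⟨mem_insert_of_mem hE'.1, ne_of_mem_of_not_mem hE'.1 hE, hE'.2⟩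

lemma binomPr_edgeFree_le (hp₀ : 0 ≤ p) (hp₁ : p ≤ 1) (hJ : ∀ E ∈ J, E ⊆ C) :
    binomPr p C (EdgeFree J) ≤ Real.exp (-(∑ E ∈ J, p ^ #E) + overlapSum p J) := by
  induction J using Finset.induction_on with
  | empty => simpa [overlapSum] using binomPr_le_one hp₀ hp₁
  | insert E J hE ih =>
    rw [forall_mem_insert] at hJ
    refine (binomPr_edgeFree_insert_le hp₀ hp₁ hJ.1 hJ.2).trans
      ((mul_le_mul_of_nonneg_left (ih hJ.2) (Real.exp_pos _).le).trans ?_)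
    rw [← Real.exp_add, Real.exp_le_exp, sum_insert hE]
    linarith [add_overlapSum_le_overlapSum_insert hp₀ hE]

end Janson

/-! ### Containers -/

section Containers

variable {V : Type*} {p ε : ℝ} {S C : Finset V} {D : Finset V → Prop} {v : V}

lemma negMulLog_convexCombination_le {a b : ℝ} (hp₀ : 0 ≤ p) (hp₁ : p < 1) (hb : 0 ≤ b)
    (hba : b ≤ a) :
    Real.negMulLog ((1 - p) * a + p * b) ≤
      (1 - p) * Real.negMulLog a + p * Real.negMulLog b
        + -Real.log (1 - p) * ((1 - p) * (a - b)) := by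
  have hq : 0 < 1 - p := by linarith
  rcases (hb.trans hba).eq_or_lt with rfl | ha
  · simp [hba.antisymm hb]
  set Φ := (1 - p) * a + p * b with hΦ
  have hΦ₀ : 0 < Φ := by positivity
  have hlogconcave : (a - b) / a * Real.log (1 - p) ≤ Real.log (Φ / a) := by
    have hconc := strictConcaveOn_log_Ioi.concaveOn.2 (Set.mem_Ioi.2 hq)
      (Set.mem_Ioi.2 one_pos) (div_nonneg (sub_nonneg.2 hba) ha.le : 0 ≤ (a - b) / a)
      (div_nonneg hb ha.le : 0 ≤ b / a) (by field_simp; ring)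
    have hmix : (a - b) / a * (1 - p) + b / a = Φ / a := by rw [hΦ]; field_simp; ring
    simpa only [smul_eq_mul, Real.log_one, mul_zero, add_zero, mul_one, hmix] using hconc
  have hΦa : (a - b) * Real.log (1 - p) ≤ a * (Real.log Φ - Real.log a) := by
    rw [← Real.log_div hΦ₀.ne' ha.ne']
    refine le_trans (le_of_eq ?_) (mul_le_mul_of_nonneg_left hlogconcave ha.le)
    field_simp
  have hΦb : 0 ≤ b * (Real.log Φ - Real.log b) := by
    rcases hb.eq_or_lt with rfl | hb₀
    · simp
    · exact mul_nonneg hb (sub_nonneg.2 (Real.log_le_log hb₀ (by rw [hΦ]; nlinarith)))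
  have hexpand : Real.negMulLog Φ =
      -((1 - p) * a * Real.log Φ) - p * (b * Real.log Φ) := by
    rw [Real.negMulLog, hΦ]
    ring
  rw [hexpand, Real.negMulLog, Real.negMulLog]
  nlinarith [mul_le_mul_of_nonneg_left hΦa hq.le, mul_nonneg hp₀ hΦb]

-- A telescoped form of the chain rule for entropy: `negMulLog` of the probability of a down-set is
-- at most the total loss of probability caused by planting a single element.
lemma negMulLog_binomPr_le (hp₀ : 0 ≤ p) (hp₁ : p < 1) (C : Finset V) (hD : Antitone D) :
    Real.negMulLog (binomPr p C D) ≤ -Real.log (1 - p) *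
      ∑ v ∈ C, (binomPr p C D - binomPr p (C.erase v) fun R => D (insert v R)) := by
  induction C using Finset.induction_on generalizing D with
  | empty => by_cases h : D ∅ <;> simp [binomPr, binomExp, h]
  | insert w C hw ih =>
    set D' : Finset V → Prop := fun R => D (insert w R)
    set a := binomPr p C D
    set b := binomPr p C D'
    have hba : b ≤ a := binomPr_mono hp₀ hp₁.le fun R _ => hD (subset_insert w R)
    have hsum : ∑ v ∈ C, ((1 - p) * a + p * b -
          binomPr p ((insert w C).erase v) fun R => D (insert v R)) =
        (1 - p) * ∑ v ∈ C, (a - binomPr p (C.erase v) fun R => D (insert v R)) +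
          p * ∑ v ∈ C, (b - binomPr p (C.erase v) fun R => D' (insert v R)) := by
      rw [mul_sum, mul_sum, ← sum_add_distrib]
      refine sum_congr rfl fun v hv => ?_
      rw [erase_insert_of_ne (ne_of_mem_of_not_mem hv hw).symm, binomPr_insert (by simp [hw])]
      simp only [D', insert_comm v w]
      ring
    have ha := mul_le_mul_of_nonneg_left (ih hD) (sub_nonneg.2 hp₁.le)
    have hb := mul_le_mul_of_nonneg_left
      (ih (D := D') fun A B h => hD (insert_subset_insert w h)) hp₀
    have hstep := negMulLog_convexCombination_le hp₀ hp₁ (binomPr_nonneg hp₀ hp₁.le) hba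
    rw [binomPr_insert hw, sum_insert hw, hsum, erase_insert hw]
    linarith

/-- The potential that does not increase along the container algorithm with fingerprint `S` and
remaining candidates `C`. -/
noncomputable def containerPotential (p ε : ℝ) (D : Finset V → Prop) (S C : Finset V) : ℝ :=
  binomPr p C (fun R => D (R ∪ S)) / ((1 - p) ^ #C * (1 - ε) ^ #S)

/-- The stopping condition of the container algorithm: planting one more element of `C` loses at
most an `ε`-fraction of the probability of `D`. -/
def Saturated (p ε : ℝ) (D : Finset V → Prop) (S C : Finset V) : Prop :=
  ∀ v ∈ C, (1 - ε) * binomPr p C (fun R => D (R ∪ S)) ≤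
    binomPr p (C.erase v) fun R => D (insert v R ∪ S)

lemma containerPotential_erase_le (hp₀ : 0 ≤ p) (hp₁ : p < 1) (hε : ε < 1) (hv : v ∈ C) :
    containerPotential p ε D S (C.erase v) ≤ containerPotential p ε D S C := by
  have : 0 < 1 - p := by linarith
  have : 0 < 1 - ε := by linarith
  have hpr := binomPr_insert (p := p) (notMem_erase v C) fun R => D (R ∪ S)
  have hnn : 0 ≤ binomPr p (C.erase v) fun R => D (insert v R ∪ S) := binomPr_nonneg hp₀ hp₁.le
  rw [insert_erase hv] at hpr
  rw [containerPotential, containerPotential, ← card_erase_add_one hv, pow_succ,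
    div_le_div_iff₀ (by positivity) (by positivity)]
  have : (1 - p) * binomPr p (C.erase v) (fun R => D (R ∪ S)) ≤
      binomPr p C fun R => D (R ∪ S) := by nlinarith
  calc _ = (1 - p) * binomPr p (C.erase v) (fun R => D (R ∪ S)) *
        ((1 - p) ^ #(C.erase v) * (1 - ε) ^ #S) := by ring
    _ ≤ _ := by gcongr

lemma containerPotential_insert_le (hp₀ : 0 ≤ p) (hp₁ : p < 1) (hε : ε < 1) (hv : v ∈ C)
    (hvS : v ∉ S) (hlt : binomPr p (C.erase v) (fun R => D (insert v R ∪ S)) <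
      (1 - ε) * binomPr p C fun R => D (R ∪ S)) :
    containerPotential p ε D (insert v S) (C.erase v) ≤ containerPotential p ε D S C := by
  have : 0 < 1 - p := by linarith
  have : 0 < 1 - ε := by linarith
  have hnn : 0 ≤ binomPr p C fun R => D (R ∪ S) := binomPr_nonneg hp₀ hp₁.le
  simp only [insert_union] at hlt
  simp only [containerPotential, union_insert]
  rw [← card_erase_add_one hv, card_insert_of_notMem hvS, pow_succ, pow_succ,
    div_le_div_iff₀ (by positivity) (by positivity)]
  calc _ ≤ (1 - ε) * binomPr p C (fun R => D (R ∪ S)) *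
        ((1 - p) ^ #(C.erase v) * 1 * (1 - ε) ^ #S) := by gcongr; linarith
    _ = _ := by ring

lemma exists_saturated_container (hp₀ : 0 ≤ p) (hp₁ : p < 1) (hε : ε < 1)
    (D : Finset V → Prop) (hSC : Disjoint C S) :
    ∃ f : Finset V → Finset V, ∀ I, S ⊆ I → I ⊆ S ∪ C →
      ∃ S' ⊆ I, S ⊆ S' ∧ I ⊆ S' ∪ f S' ∧ Saturated p ε D S' (f S') ∧
        containerPotential p ε D S' (f S') ≤ containerPotential p ε D S C := by
  induction C using Finset.strongInduction generalizing S with | H C ih =>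
  by_cases hsat : Saturated p ε D S C
  · exact ⟨fun _ => C, fun I hSI hIC => ⟨S, hSI, subset_rfl, hIC, hsat, le_rfl⟩⟩
  simp only [Saturated, not_forall, not_le] at hsat
  obtain ⟨v, hv, hlt⟩ := hsat
  have hvS : v ∉ S := disjoint_left.1 hSC hv
  obtain ⟨f₁, hf₁⟩ := ih _ (erase_ssubset hv) (S := insert v S)
    (disjoint_insert_right.2 ⟨notMem_erase v C, hSC.mono_left (erase_subset v C)⟩)
  obtain ⟨f₀, hf₀⟩ := ih _ (erase_ssubset hv) (hSC.mono_left (erase_subset v C))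
  refine ⟨fun T => if v ∈ T then f₁ T else f₀ T, fun I hSI hIC => ?_⟩
  by_cases hvI : v ∈ I
  · obtain ⟨S', hS'I, hSS', hcover, hsat, hpot⟩ := hf₁ I (insert_subset hvI hSI) (by
      rwa [insert_union, ← union_insert, insert_erase hv])
    have hvS' : v ∈ S' := hSS' (mem_insert_self v S)
    refine ⟨S', hS'I, (subset_insert v S).trans hSS', ?_⟩
    simp only [hvS', if_true]
    exact ⟨hcover, hsat, hpot.trans (containerPotential_insert_le hp₀ hp₁ hε hv hvS hlt)⟩
  · obtain ⟨S', hS'I, hSS', hcover, hsat, hpot⟩ := hf₀ I hSI (by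
      rwa [← erase_eq_of_notMem hvS, ← erase_union_distrib, subset_erase, and_iff_left hvI])
    have hvS' : v ∉ S' := fun h => hvI (hS'I h)
    refine ⟨S', hS'I, hSS', ?_⟩
    simp only [hvS', if_false]
    exact ⟨hcover, hsat, hpot.trans (containerPotential_erase_le hp₀ hp₁ hε hv)⟩

lemma Saturated.rpow_le_binomPr (hp₀ : 0 ≤ p) (hp₁ : p < 1) (hD : Antitone D) (hDS : D S)
    (hsat : Saturated p ε D S C) :
    (1 - p) ^ (ε * #C) ≤ binomPr p C fun R => D (R ∪ S) := by
  have hq : 0 < 1 - p := by linarith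
  have hlog : 0 ≤ -Real.log (1 - p) := neg_nonneg.2 (Real.log_nonpos hq.le (by linarith))
  set Φ := binomPr p C fun R => D (R ∪ S)
  have hΦ : 0 < Φ := (pow_pos hq #C).trans_le
    (one_sub_pow_le_binomPr hp₀ hp₁.le (by rwa [empty_union]))
  have hloss : ∑ v ∈ C, (Φ - binomPr p (C.erase v) fun R => D (insert v R ∪ S)) ≤
      #C * (ε * Φ) := by
    rw [← nsmul_eq_mul]
    exact sum_le_card_nsmul _ _ _ fun v hv => by linarith [hsat v hv]
  have hent := (negMulLog_binomPr_le hp₀ hp₁ C (D := fun R => D (R ∪ S))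
    fun A B h => hD (union_subset_union_left h)).trans (mul_le_mul_of_nonneg_left hloss hlog)
  have hmul : Φ * (Real.log (1 - p) * (ε * #C)) ≤ Φ * Real.log Φ := by
    rw [Real.negMulLog] at hent
    linarith
  rw [Real.rpow_def_of_pos hq, ← Real.le_log_iff_exp_le hΦ]
  exact le_of_mul_le_mul_left hmul hΦ

lemma exists_container [Fintype V] (hp₀ : 0 ≤ p) (hp₁ : p < 1) (hε₀ : 0 ≤ ε) (hε₁ : ε < 1)
    (hD : Antitone D) :
    ∃ f : Finset V → Finset V, ∀ I, D I → ∃ S ⊆ I, I ⊆ S ∪ f S ∧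
      (1 - p) ^ Fintype.card V ≤ (1 - ε) ^ #S ∧
      (1 - p) ^ (ε * Fintype.card V) ≤ binomPr p (f S) D := by
  have hq : 0 < 1 - p := by linarith
  have hε' : 0 < 1 - ε := by linarith
  obtain ⟨f, hf⟩ := exists_saturated_container (C := univ) hp₀ hp₁ hε₁ D (disjoint_empty_right _)
  refine ⟨f, fun I hI => ?_⟩
  obtain ⟨S, hSI, -, hcover, hsat, hpot⟩ := hf I (empty_subset I) (by simp)
  have hDS : D S := hD hSI hI
  refine ⟨S, hSI, hcover, ?_, ?_⟩
  · have hlower : (1 - p) ^ #(f S) ≤ binomPr p (f S) fun R => D (R ∪ S) :=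
      one_sub_pow_le_binomPr hp₀ hp₁.le (by rwa [empty_union])
    have hupper : binomPr p univ (fun R => D (R ∪ ∅)) ≤ 1 := binomPr_le_one hp₀ hp₁.le
    have hpot' : 1 / (1 - ε) ^ #S ≤ 1 / (1 - p) ^ Fintype.card V :=
      calc 1 / (1 - ε) ^ #S = (1 - p) ^ #(f S) / ((1 - p) ^ #(f S) * (1 - ε) ^ #S) := by
            field_simp
        _ ≤ containerPotential p ε D S (f S) := by unfold containerPotential; gcongr
        _ ≤ containerPotential p ε D ∅ univ := hpot
        _ ≤ 1 / (1 - p) ^ Fintype.card V := by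
            rw [containerPotential, card_empty, pow_zero, mul_one, card_univ]; gcongr
    exact (one_div_le_one_div (by positivity) (by positivity)).1 hpot'
  · calc (1 - p) ^ (ε * Fintype.card V) ≤ (1 - p) ^ (ε * #(f S)) :=
          Real.rpow_le_rpow_of_exponent_ge hq (by linarith)
            (by gcongr; exact card_le_univ _)
      _ ≤ binomPr p (f S) fun R => D (R ∪ S) := hsat.rpow_le_binomPr hp₀ hp₁ hD hDS
      _ ≤ binomPr p (f S) D := binomPr_mono hp₀ hp₁.le fun R _ => hD subset_union_left

end Containers

/-! ### Random vertex subsets of hypergraphs -/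

section Moments

variable {V : Type*} {p : ℝ} {H : Finset (Finset V)}

/-- The edges of the hypergraph `H` contained in `A`. -/
noncomputable def edgesIn (H : Finset (Finset V)) (A : Finset V) : Finset (Finset V) :=
  {E ∈ H | E ⊆ A}

lemma mem_edgesIn {E A : Finset V} : E ∈ edgesIn H A ↔ E ∈ H ∧ E ⊆ A :=
  mem_filter

lemma card_edgesIn_eq_sum (H : Finset (Finset V)) (A : Finset V) :
    (#(edgesIn H A) : ℝ) = ∑ E ∈ H, if E ⊆ A then (1 : ℝ) else 0 := by
  simp [edgesIn]

lemma sum_pow_card_union_le (hp₀ : 0 ≤ p) (H : Finset (Finset V)) :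
    ∑ E ∈ H, ∑ E' ∈ H, p ^ #(E ∪ E') ≤
      ∑ E ∈ H, p ^ #E + overlapSum p H + (∑ E ∈ H, p ^ #E) ^ 2 := by
  rw [overlapSum, sq, sum_mul, ← sum_add_distrib, ← sum_add_distrib]
  refine sum_le_sum fun E hE => ?_
  have hdiag : p ^ #E = ∑ E' ∈ H, if E' = E then p ^ #E else 0 := by
    rw [sum_ite_eq' H E, if_pos hE]
  rw [mul_sum, sum_filter]
  nth_rewrite 1 [hdiag]
  rw [← sum_add_distrib, ← sum_add_distrib]
  refine sum_le_sum fun E' _ => ?_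
  by_cases heq : E' = E
  · subst heq
    simpa using by positivity
  · by_cases hdisj : Disjoint E E'
    · simp [heq, hdisj, card_union_of_disjoint hdisj, pow_add]
    · simpa [heq, hdisj] using by positivity

variable [Fintype V]

lemma binomExp_subset (E : Finset V) :
    binomExp p univ (fun A => if E ⊆ A then (1 : ℝ) else 0) = p ^ #E := by
  rw [← binomPr_subset (subset_univ E), binomPr]
  congr!

lemma binomExp_card_edgesIn (p : ℝ) (H : Finset (Finset V)) :
    binomExp p univ (fun A => (#(edgesIn H A) : ℝ)) = ∑ E ∈ H, p ^ #E := by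
  simp only [card_edgesIn_eq_sum]
  rw [binomExp_sum]
  exact sum_congr rfl fun E _ => binomExp_subset E

lemma binomExp_sq_card_edgesIn (p : ℝ) (H : Finset (Finset V)) :
    binomExp p univ (fun A => (#(edgesIn H A) : ℝ) ^ 2) =
      ∑ E ∈ H, ∑ E' ∈ H, p ^ #(E ∪ E') := by
  have hsq (A : Finset V) : (#(edgesIn H A) : ℝ) ^ 2 =
      ∑ E ∈ H, ∑ E' ∈ H, if E ∪ E' ⊆ A then (1 : ℝ) else 0 := by
    rw [card_edgesIn_eq_sum, sq, sum_mul_sum]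
    refine sum_congr rfl fun E _ => sum_congr rfl fun E' _ => ?_
    by_cases hE : E ⊆ A <;> by_cases hE' : E' ⊆ A <;> simp [union_subset_iff, hE, hE']
  simp only [hsq, binomExp_sum]
  exact sum_congr rfl fun E _ => sum_congr rfl fun E' _ => binomExp_subset (E ∪ E')

lemma variance_card_edgesIn_le (hp₀ : 0 ≤ p) (H : Finset (Finset V)) :
    binomExp p univ (fun A => (#(edgesIn H A) - ∑ E ∈ H, p ^ #E) ^ 2) ≤
      ∑ E ∈ H, p ^ #E + overlapSum p H := by
  set μ := ∑ E ∈ H, p ^ #E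
  have hexpand : binomExp p univ (fun A => (#(edgesIn H A) - μ) ^ 2) =
      ∑ E ∈ H, ∑ E' ∈ H, p ^ #(E ∪ E') - μ ^ 2 := by
    have hsq (A : Finset V) : (#(edgesIn H A) - μ) ^ 2 =
        (#(edgesIn H A) : ℝ) ^ 2 + ((-2 * μ) * #(edgesIn H A) + μ ^ 2) := by ring
    simp only [hsq, binomExp_add, binomExp_const_mul, binomExp_const, binomExp_card_edgesIn,
      binomExp_sq_card_edgesIn]
    ring
  linarith [sum_pow_card_union_le hp₀ H]

lemma binomPr_le_abs_sub_le {l : ℝ} (hp₀ : 0 ≤ p) (hp₁ : p ≤ 1) (hl : 0 < l)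
    (F : Finset V → ℝ) (μ : ℝ) :
    binomPr p univ (fun A => l ≤ |F A - μ|) ≤
      binomExp p univ (fun A => (F A - μ) ^ 2) / l ^ 2 := by
  rw [div_eq_inv_mul, ← binomExp_const_mul]
  refine binomPr_le_binomExp hp₀ hp₁ (fun A _ => by positivity) fun A _ hA => ?_
  rw [← div_eq_inv_mul, one_le_div (by positivity), ← sq_abs (F A - μ)]
  exact pow_le_pow_left₀ hl.le hA 2

-- The second moment method for the hypergraph of singletons.
lemma binomPr_card_le_half_mean_le [Nonempty V] (hp₀ : 0 < p) (hp₁ : p ≤ 1) :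
    binomPr p univ (fun A : Finset V => (#A : ℝ) ≤ p * Fintype.card V / 2) ≤
      4 / (p * Fintype.card V) := by
  have : (0 : ℝ) < Fintype.card V := by exact_mod_cast Fintype.card_pos
  set H : Finset (Finset V) := univ.image fun v => {v}
  have hsum (F : Finset V → ℝ) : ∑ E ∈ H, F E = ∑ v, F {v} :=
    sum_image singleton_injective.injOn
  have hcard (A : Finset V) : (#(edgesIn H A) : ℝ) = #A := by
    rw [card_edgesIn_eq_sum, hsum]
    simp
  have hmean : ∑ E ∈ H, p ^ #E = p * Fintype.card V := by
    rw [hsum]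
    simp [mul_comm]
  have hoverlap : overlapSum p H = 0 := by
    refine sum_eq_zero fun E hE => sum_eq_zero fun E' hE' => ?_
    obtain ⟨hE'H, hne, hinter⟩ := mem_filter.1 hE'
    obtain ⟨v, -, rfl⟩ := mem_image.1 hE
    obtain ⟨w, -, rfl⟩ := mem_image.1 hE'H
    exact absurd (disjoint_singleton.2 fun h => hne (congrArg _ h.symm)) hinter
  have hvar := variance_card_edgesIn_le hp₀.le H
  rw [hoverlap, hmean, add_zero] at hvar
  calc binomPr p univ (fun A : Finset V => (#A : ℝ) ≤ p * Fintype.card V / 2)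
      ≤ binomPr p univ fun A : Finset V =>
          p * Fintype.card V / 2 ≤ |(#(edgesIn H A) : ℝ) - p * Fintype.card V| :=
        binomPr_mono hp₀.le hp₁ fun A _ hA => by
          rw [hcard, abs_sub_comm]
          exact le_trans (by linarith) (le_abs_self _)
    _ ≤ p * Fintype.card V / (p * Fintype.card V / 2) ^ 2 :=
        (binomPr_le_abs_sub_le hp₀.le hp₁ (by positivity) _ _).trans (by gcongr)
    _ = 4 / (p * Fintype.card V) := by field_simp; norm_num

end Moments

section StableSets

variable {V : Type*} {δ : ℝ} {H : Finset (Finset V)} {A : Finset V}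

/-- `A` is stable for the hypergraph `H`: every subset of `A` of density at least `δ` contains an
edge. -/
def HypergraphStable (δ : ℝ) (H : Finset (Finset V)) (A : Finset V) : Prop :=
  ∀ X ⊆ A, δ * #A ≤ #X → ∃ E ∈ H, E ⊆ X

lemma exists_edgeFree_subset (hH : ∀ E ∈ H, E.Nonempty) (A : Finset V) :
    ∃ X ⊆ A, EdgeFree H X ∧ #A ≤ #X + #(edgesIn H A) := by
  choose f hf using hH
  set B := (edgesIn H A).attach.image fun E => f E.1 (mem_edgesIn.1 E.2).1
  refine ⟨A \ B, sdiff_subset, fun E hE hEX => ?_, ?_⟩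
  · have hEA : E ∈ edgesIn H A := mem_edgesIn.2 ⟨hE, hEX.trans sdiff_subset⟩
    exact (mem_sdiff.1 (hEX (hf E hE))).2 (mem_image.2 ⟨⟨E, hEA⟩, mem_attach _ _, rfl⟩)
  · have hB : #B ≤ #(edgesIn H A) := card_image_le.trans card_attach.le
    have := le_card_sdiff B A
    omega

lemma HypergraphStable.lt_card_edgesIn (hH : ∀ E ∈ H, E.Nonempty)
    (hA : HypergraphStable δ H A) : (1 - δ) * #A < #(edgesIn H A) := by
  by_contra! hle
  obtain ⟨X, hXA, hfree, hcard⟩ := exists_edgeFree_subset hH A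
  have hcard' : (#A : ℝ) ≤ #X + #(edgesIn H A) := by exact_mod_cast hcard
  obtain ⟨E, hE, hEX⟩ := hA X hXA (by linarith)
  exact hfree E hE hEX

end StableSets

/-! ### Sparse random subsets are not stable -/

section BoundedCodegree

variable {V : Type*} [Fintype V] {p δ K : ℝ} {m : ℕ} {H J : Finset (Finset V)}

/-- `H` is an `(m + 2)`-uniform hypergraph in which every `t ≤ m + 1` vertices lie in at most
`K n ^ (m + 1 - t)` edges, where `n` is the number of vertices. -/
structure BoundedCodegree (H : Finset (Finset V)) (m : ℕ) (K : ℝ) : Prop where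
  card_eq : ∀ E ∈ H, #E = m + 2
  codegree_le : ∀ T, #T ≤ m + 1 →
    (#{E ∈ H | T ⊆ E} : ℝ) ≤ K * (Fintype.card V : ℝ) ^ (m + 1 - #T)

namespace BoundedCodegree

lemma sum_pow_card (hH : BoundedCodegree H m K) (hJ : J ⊆ H) (p : ℝ) :
    ∑ E ∈ J, p ^ #E = #J * p ^ (m + 2) := by
  rw [sum_congr rfl fun E hE => by rw [hH.card_eq E (hJ hE)], sum_const, nsmul_eq_mul]

lemma card_le (hH : BoundedCodegree H m K) (hJ : J ⊆ H) :
    (#J : ℝ) ≤ K * (Fintype.card V : ℝ) ^ (m + 1) := by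
  have := hH.codegree_le ∅ (Nat.zero_le _)
  simp only [empty_subset, filter_true, card_empty, tsub_zero] at this
  exact le_trans (by exact_mod_cast card_le_card hJ) this

lemma nonempty (hH : BoundedCodegree H m K) : ∀ E ∈ H, E.Nonempty := fun E hE =>
  card_pos.1 (by rw [hH.card_eq E hE]; omega)

lemma sum_pow_card_le (hH : BoundedCodegree H m K) (hp₀ : 0 ≤ p) :
    ∑ E ∈ H, p ^ #E ≤
      K * ((Fintype.card V : ℝ) ^ m * p ^ (m + 1)) * (p * Fintype.card V) := by
  rw [hH.sum_pow_card subset_rfl]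
  calc (#H : ℝ) * p ^ (m + 2) ≤ K * (Fintype.card V : ℝ) ^ (m + 1) * p ^ (m + 2) := by
        gcongr; exact hH.card_le subset_rfl
    _ = _ := by ring

lemma codegree_mul_pow_le (hH : BoundedCodegree H m K) (hK : 0 ≤ K) (hp₀ : 0 ≤ p)
    (hpn : 1 ≤ p * Fintype.card V) {T : Finset V} (hT : T.Nonempty) (hTm : #T ≤ m + 1) :
    #{E ∈ H | T ⊆ E} * p ^ (2 * (m + 2) - #T) ≤
      K * (Fintype.card V : ℝ) ^ m * p ^ (2 * m + 3) := by
  obtain ⟨s, hs⟩ := Nat.exists_eq_add_one.2 hT.card_pos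
  obtain ⟨d, rfl⟩ := Nat.exists_eq_add_of_le (show s ≤ m by omega)
  have hdeg := hH.codegree_le T hTm
  rw [show s + d + 1 - #T = d by omega] at hdeg
  rw [show 2 * (s + d + 2) - #T = s + 2 * d + 3 by omega]
  calc #{E ∈ H | T ⊆ E} * p ^ (s + 2 * d + 3)
      ≤ K * (Fintype.card V : ℝ) ^ d * p ^ (s + 2 * d + 3) * (p * Fintype.card V) ^ s :=
        (mul_le_mul_of_nonneg_right hdeg (by positivity)).trans
          (le_mul_of_one_le_right (by positivity) (one_le_pow₀ hpn))
    _ = _ := by ring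

lemma sum_intersecting_le (hH : BoundedCodegree H m K) (hK : 0 ≤ K) (hJ : J ⊆ H)
    (hp₀ : 0 ≤ p) (hpn : 1 ≤ p * Fintype.card V) {E : Finset V} (hE : E ∈ H) :
    ∑ E' ∈ J with E' ≠ E ∧ ¬Disjoint E E', p ^ #(E ∪ E') ≤
      2 ^ (m + 2) * (K * (Fintype.card V : ℝ) ^ m * p ^ (2 * m + 3)) := by
  set N := J.filter fun E' => E' ≠ E ∧ ¬Disjoint E E'
  have hN {E' : Finset V} (hE' : E' ∈ N) : E' ∈ H ∧ E' ≠ E ∧ ¬Disjoint E E' :=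
    ⟨hJ (mem_filter.1 hE').1, (mem_filter.1 hE').2⟩
  have hfiber : ∀ T ∈ E.powerset, ∑ E' ∈ N with E ∩ E' = T, p ^ #(E ∪ E') ≤
      K * (Fintype.card V : ℝ) ^ m * p ^ (2 * m + 3) := by
    intro T _
    rcases (N.filter fun E' => E ∩ E' = T).eq_empty_or_nonempty with hempty | ⟨E₀, hE₀⟩
    · rw [hempty, sum_empty]
      positivity
    obtain ⟨hE₀N, rfl⟩ := mem_filter.1 hE₀
    obtain ⟨hE₀H, hne, hinter⟩ := hN hE₀N
    have hssub : E ∩ E₀ ⊂ E := inter_subset_left.ssubset_of_ne fun h => hne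
      (eq_of_subset_of_card_le (inter_eq_left.1 h)
        (by rw [hH.card_eq E hE, hH.card_eq E₀ hE₀H])).symm
    have hcard := card_lt_card hssub
    rw [hH.card_eq E hE] at hcard
    refine le_trans ?_ (hH.codegree_mul_pow_le hK hp₀ hpn
      (not_disjoint_iff_nonempty_inter.1 hinter) (Nat.le_of_lt_succ hcard))
    rw [← nsmul_eq_mul]
    refine (sum_le_card_nsmul _ _ (p ^ (2 * (m + 2) - #(E ∩ E₀))) fun E' hE' => ?_).trans
      (nsmul_le_nsmul_left (by positivity) (card_le_card fun E' hE' => ?_))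
    · obtain ⟨hE'N, hT⟩ := mem_filter.1 hE'
      rw [card_union, hT, hH.card_eq E hE, hH.card_eq E' (hN hE'N).1, two_mul]
    · obtain ⟨hE'N, hT⟩ := mem_filter.1 hE'
      exact mem_filter.2 ⟨(hN hE'N).1, hT ▸ inter_subset_right⟩
  rw [← sum_fiberwise_of_maps_to (g := fun E' => E ∩ E') (t := E.powerset)
    fun E' _ => mem_powerset.2 inter_subset_left]
  refine (sum_le_card_nsmul _ _ _ hfiber).trans (le_of_eq ?_)
  rw [card_powerset, hH.card_eq E hE, nsmul_eq_mul]
  push_cast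
  ring

lemma overlapSum_le (hH : BoundedCodegree H m K) (hK : 0 ≤ K) (hJ : J ⊆ H) (hp₀ : 0 ≤ p)
    (hpn : 1 ≤ p * Fintype.card V) :
    overlapSum p J ≤ 2 ^ (m + 2) * K ^ 2 *
      ((Fintype.card V : ℝ) ^ m * p ^ (m + 1)) ^ 2 * (p * Fintype.card V) := by
  refine (sum_le_card_nsmul _ _ _ fun E hE =>
    hH.sum_intersecting_le hK hJ hp₀ hpn (hJ hE)).trans ?_
  rw [nsmul_eq_mul]
  refine (mul_le_mul_of_nonneg_right (hH.card_le hJ) (by positivity)).trans (le_of_eq ?_)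
  ring

-- A stable set spans more than `(1 - δ) |A|` edges, which is twice the expected number of edges.
lemma binomPr_hypergraphStable_le_div (hH : BoundedCodegree H m K) (hK : 0 ≤ K)
    (hp₀ : 0 ≤ p) (hp₁ : p ≤ 1) (hpn : 1 ≤ p * Fintype.card V) (hδ₀ : 0 ≤ δ) (hδ₁ : δ < 1)
    (hKp : K * ((Fintype.card V : ℝ) ^ m * p ^ (m + 1)) ≤ (1 - δ) / 4) :
    binomPr p univ (HypergraphStable δ H) ≤
      (2 ^ (m + 4) / (1 - δ) ^ 2 + 4) / (p * Fintype.card V) := by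
  have hp : 0 < p := hp₀.lt_of_ne fun h => by simp [← h] at hpn; linarith
  have : Nonempty V := Fintype.card_pos_iff.1 (Nat.pos_of_ne_zero fun h => by
    simp [h] at hpn; linarith)
  set w := p * Fintype.card V
  set Y := (Fintype.card V : ℝ) ^ m * p ^ (m + 1)
  set μ := ∑ E ∈ H, p ^ #E
  set a := (1 - δ) / 4 with ha
  have ha₀ : 0 < a := by linarith
  have : 0 ≤ K * Y := by positivity
  have : 0 < w := by linarith
  have hμ : μ ≤ a * w := (hH.sum_pow_card_le hp₀).trans (by gcongr)
  have hvar : μ + overlapSum p H ≤ 2 ^ m * w := by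
    have hoverlap : overlapSum p H ≤ 2 ^ m * 4 * a ^ 2 * w :=
      (hH.overlapSum_le hK subset_rfl hp₀ hpn).trans (by
        rw [mul_assoc (2 ^ (m + 2)), ← mul_pow, pow_add]
        gcongr
        norm_num)
    have hpow : (1 : ℝ) ≤ 2 ^ m := one_le_pow₀ one_le_two
    have : a + 2 ^ m * 4 * a ^ 2 ≤ 2 ^ m := by
      have ha₁ : a ≤ 1 / 4 := by linarith
      have hsq : a ^ 2 ≤ 1 / 16 := (pow_le_pow_left₀ ha₀.le ha₁ 2).trans (by norm_num)
      nlinarith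
    nlinarith
  have hmany : binomPr p univ (fun A => a * w ≤ |(#(edgesIn H A) : ℝ) - μ|) ≤
      2 ^ (m + 4) / (1 - δ) ^ 2 / w := by
    refine ((binomPr_le_abs_sub_le hp₀ hp₁ (by positivity) _ μ).trans
      (div_le_div_of_nonneg_right ((variance_card_edgesIn_le hp₀ H).trans hvar)
        (by positivity))).trans (le_of_eq ?_)
    have : 1 - δ ≠ 0 := by linarith
    rw [ha]
    field_simp
    ring
  rw [add_div]
  refine le_trans ?_ (add_le_add hmany (binomPr_card_le_half_mean_le hp hp₁))
  refine le_trans (binomPr_mono hp₀ hp₁ fun A _ hA => ?_) (binomPr_or_le hp₀ hp₁ _ _)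
  refine or_iff_not_imp_right.2 fun hlarge => ?_
  have := hA.lt_card_edgesIn hH.nonempty
  exact le_trans (by nlinarith) (le_abs_self _)

lemma binomPr_hypergraphStable_le_mul (hH : BoundedCodegree H m K) (hp₀ : 0 ≤ p) (hp₁ : p ≤ 1)
    (hδ₁ : δ ≤ 1) :
    binomPr p univ (HypergraphStable δ H) ≤
      K * ((Fintype.card V : ℝ) ^ m * p ^ (m + 1)) * (p * Fintype.card V) :=
  calc binomPr p univ (HypergraphStable δ H)
      ≤ binomPr p univ (fun A => ∃ E ∈ H, E ⊆ A) := binomPr_mono hp₀ hp₁ fun A _ hA =>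
        hA A subset_rfl (mul_le_of_le_one_left (Nat.cast_nonneg _) hδ₁)
    _ ≤ ∑ E ∈ H, binomPr p univ (fun A => E ⊆ A) := binomPr_exists_le hp₀ hp₁ H _
    _ = ∑ E ∈ H, p ^ #E := sum_congr rfl fun E _ => binomPr_subset (subset_univ E)
    _ ≤ _ := hH.sum_pow_card_le hp₀

lemma binomPr_hypergraphStable_le (hH : BoundedCodegree H m K) (hK : 0 ≤ K)
    (hp₀ : 0 ≤ p) (hp₁ : p ≤ 1) (hδ₀ : 0 ≤ δ) (hδ₁ : δ < 1)
    (hKp : K * ((Fintype.card V : ℝ) ^ m * p ^ (m + 1)) ≤ (1 - δ) / 4) {M : ℝ} (hM : 1 ≤ M) :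
    binomPr p univ (HypergraphStable δ H) ≤
      (2 ^ (m + 4) / (1 - δ) ^ 2 + 4) / M + K * M ^ (m + 2) / Fintype.card V := by
  have : 0 ≤ 1 - δ := by linarith
  rcases le_total M (p * Fintype.card V) with hpn | hpn
  · calc _ ≤ (2 ^ (m + 4) / (1 - δ) ^ 2 + 4) / (p * Fintype.card V) :=
          hH.binomPr_hypergraphStable_le_div hK hp₀ hp₁ (hM.trans hpn) hδ₀ hδ₁ hKp
      _ ≤ (2 ^ (m + 4) / (1 - δ) ^ 2 + 4) / M := by gcongr
      _ ≤ _ := le_add_of_nonneg_right (by positivity)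
  · refine (hH.binomPr_hypergraphStable_le_mul hp₀ hp₁ hδ₁.le).trans ?_
    rcases eq_or_ne (Fintype.card V : ℝ) 0 with hn | hn
    · simpa [hn] using by positivity
    calc _ = K * (p * Fintype.card V) ^ (m + 2) / Fintype.card V := by field_simp; ring
      _ ≤ K * M ^ (m + 2) / Fintype.card V := by gcongr
      _ ≤ _ := le_add_of_nonneg_left (by positivity)

end BoundedCodegree

theorem tendsto_binomPr_hypergraphStable_zero {ι : Type*} {l : Filter ι} {V : ι → Type*}
    [∀ i, Fintype (V i)] {H : ∀ i, Finset (Finset (V i))} {m : ℕ} {K δ : ℝ} {p : ι → ℝ}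
    (hV : Tendsto (fun i => (Fintype.card (V i) : ℝ)) l atTop)
    (hH : ∀ i, BoundedCodegree (H i) m K) (hK : 0 ≤ K) (hδ₀ : 0 ≤ δ) (hδ₁ : δ < 1)
    (hp : ∀ i, 0 ≤ p i ∧ p i ≤ 1)
    (hKp : ∀ i, K * ((Fintype.card (V i) : ℝ) ^ m * p i ^ (m + 1)) ≤ (1 - δ) / 4) :
    Tendsto (fun i => binomPr (p i) univ (HypergraphStable δ (H i))) l (𝓝 0) := by
  set s : ℝ := 1 / (2 * (m + 2)) with hs
  have hs₀ : 0 < s := by positivity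
  set C : ℝ := 2 ^ (m + 4) / (1 - δ) ^ 2 + 4
  have hbound : ∀ᶠ i in l, binomPr (p i) univ (HypergraphStable δ (H i)) ≤
      C * (Fintype.card (V i) : ℝ) ^ (-s) + K * (Fintype.card (V i) : ℝ) ^ (-(1 / 2) : ℝ) := by
    filter_upwards [hV.eventually_ge_atTop 1] with i hi
    have hpos : (0 : ℝ) < Fintype.card (V i) := by linarith
    refine ((hH i).binomPr_hypergraphStable_le hK (hp i).1 (hp i).2 hδ₀ hδ₁ (hKp i)
      (Real.one_le_rpow hi hs₀.le)).trans (le_of_eq ?_)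
    have hsm : s * ((m + 2 : ℕ) : ℝ) = 1 / 2 := by rw [hs]; push_cast; field_simp
    rw [Real.rpow_neg hpos.le, ← div_eq_mul_inv, ← Real.rpow_mul_natCast hpos.le, hsm,
      mul_div_assoc, ← Real.rpow_sub_one hpos.ne', show (1 / 2 - 1 : ℝ) = -(1 / 2) by norm_num]
  have hlim : Tendsto (fun i => C * (Fintype.card (V i) : ℝ) ^ (-s) +
      K * (Fintype.card (V i) : ℝ) ^ (-(1 / 2) : ℝ)) l (𝓝 0) := by
    simpa using (((tendsto_rpow_neg_atTop hs₀).comp hV).const_mul C).add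
      (((tendsto_rpow_neg_atTop one_half_pos).comp hV).const_mul K)
  exact squeeze_zero' (.of_forall fun i => binomPr_nonneg (hp i).1 (hp i).2) hbound hlim

end BoundedCodegree

/-! ### Dense random subsets are stable -/

section Chernoff

variable {V : Type*} {p : ℝ} {T W : Finset V}

lemma binomExp_exp_card_inter_le (hp₀ : 0 ≤ p) (hp₁ : p ≤ 1) (C W : Finset V) :
    binomExp p C (fun R => Real.exp #(R ∩ W)) ≤ Real.exp (2 * p * #W) := by
  have hprod (R : Finset V) :
      Real.exp #(R ∩ W) = ∏ v ∈ R, if v ∈ W then Real.exp 1 else 1 := by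
    rw [prod_ite, prod_const, prod_const_one, mul_one, ← Real.exp_nat_mul, mul_one,
      filter_mem_eq_inter]
  have hfactor (v : V) : 1 - p + p * (if v ∈ W then Real.exp 1 else 1) ≤
      if v ∈ W then Real.exp (2 * p) else 1 := by
    split_ifs
    · nlinarith [Real.exp_one_lt_d9, Real.add_one_le_exp (2 * p)]
    · linarith
  have : 0 ≤ 1 - p := by linarith
  simp only [hprod, binomExp_prod]
  calc ∏ v ∈ C, (1 - p + p * if v ∈ W then Real.exp 1 else 1)
      ≤ ∏ v ∈ C, if v ∈ W then Real.exp (2 * p) else 1 :=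
        prod_le_prod (fun v _ => by positivity) fun v _ => hfactor v
    _ = Real.exp (2 * p) ^ #(C ∩ W) := by
        rw [prod_ite, prod_const, prod_const_one, mul_one, filter_mem_eq_inter]
    _ ≤ Real.exp (2 * p) ^ #W :=
        pow_le_pow_right₀ (Real.one_le_exp (by positivity)) (card_le_card inter_subset_right)
    _ = Real.exp (2 * p * #W) := by rw [← Real.exp_nat_mul, mul_comm]

lemma binomPr_subset_and_le_card_inter_le [Fintype V] (hp₀ : 0 ≤ p) (hp₁ : p ≤ 1)
    (hTW : Disjoint T W) (t : ℝ) :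
    binomPr p univ (fun A => T ⊆ A ∧ t ≤ #(A ∩ W)) ≤ p ^ #T * Real.exp (2 * p * #W - t) := by
  rw [binomPr_superset (subset_univ T), sub_eq_neg_add, Real.exp_add]
  refine mul_le_mul_of_nonneg_left ((binomPr_le_binomExp hp₀ hp₁ (F := fun R =>
    Real.exp (-t) * Real.exp #(R ∩ W)) (fun R _ => by positivity) fun R _ hR => ?_).trans ?_)
    (by positivity)
  · rw [union_inter_distrib_right, disjoint_iff_inter_eq_empty.1 hTW, union_empty] at hR
    rw [← Real.exp_add]
    exact Real.one_le_exp (by linarith)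
  · rw [binomExp_const_mul]
    exact mul_le_mul_of_nonneg_left (binomExp_exp_card_inter_le hp₀ hp₁ _ W) (Real.exp_pos _).le

lemma sum_pow_card_le_exp [Fintype V] {z : ℝ} (hp₀ : 0 ≤ p) (hz₀ : 0 < z) (hz₁ : z ≤ 1)
    (s : ℝ) :
    ∑ T : Finset V with #T ≤ s, p ^ #T ≤
      Real.exp (s * Real.log (1 / z) + p * z * Fintype.card V) := by
  have hlog : 0 ≤ Real.log (1 / z) := Real.log_nonneg ((one_le_div hz₀).2 hz₁)
  have hterm (T : Finset V) (hT : #T ≤ s) :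
      p ^ #T ≤ Real.exp (s * Real.log (1 / z)) * (p * z) ^ #T := by
    have hz : z ^ #T = Real.exp (-(#T * Real.log (1 / z))) := by
      rw [one_div, Real.log_inv, mul_neg, neg_neg, Real.exp_nat_mul, Real.exp_log hz₀]
    rw [mul_pow, mul_left_comm, hz, ← Real.exp_add]
    exact le_mul_of_one_le_right (by positivity) (Real.one_le_exp (by nlinarith))
  calc ∑ T : Finset V with #T ≤ s, p ^ #T
      ≤ ∑ T : Finset V with #T ≤ s, Real.exp (s * Real.log (1 / z)) * (p * z) ^ #T :=
        sum_le_sum fun T hT => hterm T (mem_filter.1 hT).2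
    _ ≤ ∑ T : Finset V, Real.exp (s * Real.log (1 / z)) * (p * z) ^ #T :=
        sum_le_sum_of_subset_of_nonneg (subset_univ _) fun _ _ _ => by positivity
    _ = Real.exp (s * Real.log (1 / z)) * (p * z + 1) ^ Fintype.card V := by
        rw [← mul_sum, ← Fintype.sum_pow_mul_eq_add_pow]
        simp only [one_pow, mul_one]
    _ ≤ Real.exp (s * Real.log (1 / z)) * Real.exp (p * z) ^ Fintype.card V := by
        gcongr
        exact Real.add_one_le_exp _
    _ = Real.exp (s * Real.log (1 / z) + p * z * Fintype.card V) := by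
        rw [← Real.exp_nat_mul, ← Real.exp_add, mul_comm (p * z)]

end Chernoff

section Containers

variable {V : Type*} {p δ s u : ℝ} {H : Finset (Finset V)} {f : Finset V → Finset V}

/-- Every independent set `I` of `H` is covered by a fingerprint `T ⊆ I` of size at most `s` and the
container `f T` of size at most `u`. -/
def IsContainerMap (H : Finset (Finset V)) (f : Finset V → Finset V) (s u : ℝ) : Prop :=
  ∀ I, EdgeFree H I → ∃ T ⊆ I, I ⊆ T ∪ f T ∧ (#T : ℝ) ≤ s ∧ (#(f T) : ℝ) ≤ u

namespace IsContainerMap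

lemma exists_subset_of_not_stable (hf : IsContainerMap H f s u) {A : Finset V}
    (hA : ¬HypergraphStable δ H A) :
    ∃ T, (#T : ℝ) ≤ s ∧ (#(f T) : ℝ) ≤ u ∧ T ⊆ A ∧ δ * #A - s ≤ #(A ∩ (f T \ T)) := by
  simp only [HypergraphStable, not_forall, not_exists, not_and] at hA
  obtain ⟨X, hXA, hcard, hfree⟩ := hA
  obtain ⟨T, hTX, hXT, hTs, hfu⟩ := hf X hfree
  refine ⟨T, hTs, hfu, hTX.trans hXA, ?_⟩
  have hcover : X ⊆ T ∪ A ∩ (f T \ T) := by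
    intro v hv
    by_cases hvT : v ∈ T
    · exact mem_union_left _ hvT
    · exact mem_union_right _ (mem_inter.2
        ⟨hXA hv, mem_sdiff.2 ⟨(mem_union.1 (hXT hv)).resolve_left hvT, hvT⟩⟩)
  have : (#X : ℝ) ≤ #T + #(A ∩ (f T \ T)) := by
    exact_mod_cast (card_le_card hcover).trans (card_union_le _ _)
  linarith

-- The union bound over the fingerprints of the sets that are not stable.
lemma binomPr_not_stable_le [Fintype V] [Nonempty V] (hf : IsContainerMap H f s u) (hp₀ : 0 < p)
    (hp₁ : p ≤ 1) (hδ₀ : 0 ≤ δ) {z : ℝ} (hz₀ : 0 < z) (hz₁ : z ≤ 1) :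
    binomPr p univ (fun A => ¬HypergraphStable δ H A) ≤ 4 / (p * Fintype.card V) +
      Real.exp (s * (1 + Real.log (1 / z)) + p * (z * Fintype.card V + 2 * u) -
        δ * (p * Fintype.card V) / 2) := by
  set w := p * Fintype.card V
  set t := δ * w / 2 - s with ht
  set 𝒯 : Finset (Finset V) := {T | (#T : ℝ) ≤ s ∧ (#(f T) : ℝ) ≤ u}
  have hcover : binomPr p univ (fun A => ¬HypergraphStable δ H A) ≤
      4 / w + ∑ T ∈ 𝒯, binomPr p univ fun A => T ⊆ A ∧ t ≤ #(A ∩ (f T \ T)) := by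
    refine le_trans ?_ (add_le_add (binomPr_card_le_half_mean_le hp₀ hp₁)
      (binomPr_exists_le hp₀.le hp₁ 𝒯 _))
    refine (binomPr_mono hp₀.le hp₁ fun A _ hA => ?_).trans (binomPr_or_le hp₀.le hp₁ _ _)
    refine or_iff_not_imp_left.2 fun hlarge => ?_
    obtain ⟨T, hTs, hfu, hTA, hT⟩ := hf.exists_subset_of_not_stable hA
    exact ⟨T, mem_filter.2 ⟨mem_univ T, hTs, hfu⟩, hTA, by nlinarith⟩
  have hterm : ∀ T ∈ 𝒯, binomPr p univ (fun A => T ⊆ A ∧ t ≤ #(A ∩ (f T \ T))) ≤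
      p ^ #T * Real.exp (2 * p * u - t) := by
    intro T hT
    have hcard : (#(f T \ T) : ℝ) ≤ u :=
      le_trans (by exact_mod_cast card_le_card sdiff_subset) (mem_filter.1 hT).2.2
    exact (binomPr_subset_and_le_card_inter_le hp₀.le hp₁ disjoint_sdiff t).trans (by gcongr)
  refine hcover.trans (add_le_add_right ?_ _)
  calc ∑ T ∈ 𝒯, binomPr p univ (fun A => T ⊆ A ∧ t ≤ #(A ∩ (f T \ T)))
      ≤ (∑ T : Finset V with #T ≤ s, p ^ #T) * Real.exp (2 * p * u - t) := by
        refine (sum_le_sum hterm).trans ?_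
        rw [← sum_mul]
        refine mul_le_mul_of_nonneg_right (sum_le_sum_of_subset_of_nonneg (fun T hT => ?_)
          fun _ _ _ => by positivity) (Real.exp_pos _).le
        exact mem_filter.2 ⟨mem_univ T, (mem_filter.1 hT).2.1⟩
    _ ≤ _ := mul_le_mul_of_nonneg_right (sum_pow_card_le_exp hp₀.le hz₀ hz₁ s) (Real.exp_pos _).le
    _ = _ := by
        rw [← Real.exp_add, ht]
        ring_nf

lemma binomPr_not_stable_le_div [Fintype V] [Nonempty V] {η : ℝ}
    (hf : IsContainerMap H f (η * (p * Fintype.card V)) (δ / 16 * Fintype.card V))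
    (hp₀ : 0 < p) (hp₁ : p ≤ 1) (hδ₀ : 0 < δ) (hδ₁ : δ ≤ 1)
    (hη : η * (1 + Real.log (1 / (δ / 8))) ≤ δ / 8) :
    binomPr p univ (fun A => ¬HypergraphStable δ H A) ≤
      (4 + 8 / δ) / (p * Fintype.card V) := by
  have hw : 0 < p * Fintype.card V := mul_pos hp₀ (by exact_mod_cast Fintype.card_pos)
  refine (hf.binomPr_not_stable_le hp₀ hp₁ hδ₀.le (z := δ / 8) (by positivity)
    (by linarith)).trans ?_
  rw [add_div]
  gcongr
  calc _ ≤ Real.exp (-(δ / 8 * (p * Fintype.card V))) :=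
        Real.exp_le_exp.2 (by linarith [mul_le_mul_of_nonneg_right hη hw.le])
    _ ≤ (δ / 8 * (p * Fintype.card V))⁻¹ := by
        rw [Real.exp_neg]
        exact inv_anti₀ (by positivity)
          (by linarith [Real.add_one_le_exp (δ / 8 * (p * Fintype.card V))])
    _ = 8 / δ / (p * Fintype.card V) := by field_simp

end IsContainerMap

end Containers

section Supersaturation

variable {V : Type*} [Fintype V] {K α c q ε : ℝ} {m : ℕ} {H : Finset (Finset V)} {C : Finset V}

/-- Every set of at least `α n` of the `n` vertices contains at least `c n ^ (m + 1)` edges. -/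
def Supersaturated (H : Finset (Finset V)) (m : ℕ) (α c : ℝ) : Prop :=
  ∀ C : Finset V, α * Fintype.card V ≤ #C → c * (Fintype.card V : ℝ) ^ (m + 1) ≤ #(edgesIn H C)

lemma Supersaturated.binomPr_edgeFree_le (hsat : Supersaturated H m α c)
    (hH : BoundedCodegree H m K) (hK : 0 ≤ K) (hq₀ : 0 ≤ q) (hq₁ : q ≤ 1)
    (hqn : 1 ≤ q * Fintype.card V)
    (hKq : 2 ^ (m + 2) * K ^ 2 * ((Fintype.card V : ℝ) ^ m * q ^ (m + 1)) ≤ c / 2)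
    (hC : α * Fintype.card V ≤ #C) :
    binomPr q C (EdgeFree H) ≤
      Real.exp (-(c / 2 * ((Fintype.card V : ℝ) ^ m * q ^ (m + 1)) * (q * Fintype.card V))) := by
  set Y := (Fintype.card V : ℝ) ^ m * q ^ (m + 1) with hY
  have hJ : edgesIn H C ⊆ H := filter_subset _ _
  have hmean : c * Y * (q * Fintype.card V) ≤ ∑ E ∈ edgesIn H C, q ^ #E := by
    rw [hH.sum_pow_card hJ]
    refine le_trans (le_of_eq ?_) (mul_le_mul_of_nonneg_right (hsat C hC) (by positivity))
    rw [hY]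
    ring
  have hoverlap : overlapSum q (edgesIn H C) ≤ c / 2 * Y * (q * Fintype.card V) := by
    refine (hH.overlapSum_le hK hJ hq₀ hqn).trans ?_
    calc _ = 2 ^ (m + 2) * K ^ 2 * Y * (Y * (q * Fintype.card V)) := by ring
      _ ≤ c / 2 * (Y * (q * Fintype.card V)) := by gcongr
      _ = _ := by ring
  calc binomPr q C (EdgeFree H) ≤ binomPr q C (EdgeFree (edgesIn H C)) :=
        binomPr_mono hq₀ hq₁ fun R _ hR E hE => hR E (hJ hE)
    _ ≤ Real.exp (-(∑ E ∈ edgesIn H C, q ^ #E) + overlapSum q (edgesIn H C)) :=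
        _root_.binomPr_edgeFree_le hq₀ hq₁ fun E hE => (mem_edgesIn.1 hE).2
    _ ≤ _ := Real.exp_le_exp.2 (by linarith)

lemma neg_two_mul_le_log_one_sub (hq₀ : 0 ≤ q) (hq₁ : q ≤ 1 / 2) :
    -(2 * q) ≤ Real.log (1 - q) := by
  refine le_trans ?_ (Real.one_sub_inv_le_log_of_pos (by linarith))
  have : (1 - q)⁻¹ ≤ 1 + 2 * q := (inv_le_iff_one_le_mul₀ (by linarith)).2 (by nlinarith)
  linarith

lemma mul_le_of_one_sub_pow_le {n s : ℕ} (hq₀ : 0 ≤ q) (hq₁ : q ≤ 1 / 2) (hε₁ : ε < 1)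
    (h : (1 - q) ^ n ≤ (1 - ε) ^ s) : ε * s ≤ 2 * (q * n) := by
  have hlog := Real.log_le_log (pow_pos (by linarith) n) h
  rw [Real.log_pow, Real.log_pow] at hlog
  have hq := neg_two_mul_le_log_one_sub hq₀ hq₁
  have hε := Real.log_le_sub_one_of_pos (show 0 < 1 - ε by linarith)
  nlinarith [(n.cast_nonneg : (0 : ℝ) ≤ n), (s.cast_nonneg : (0 : ℝ) ≤ s)]

lemma Supersaturated.exists_isContainerMap_of_density (hsat : Supersaturated H m α c)
    (hH : BoundedCodegree H m K) (hK : 0 ≤ K) (hq₀ : 0 < q) (hq₁ : q ≤ 1 / 2)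
    (hqn : 1 ≤ q * Fintype.card V)
    (hKq : 2 ^ (m + 2) * K ^ 2 * ((Fintype.card V : ℝ) ^ m * q ^ (m + 1)) ≤ c / 2)
    (hε₀ : 0 < ε) (hε₁ : ε < 1)
    (hεq : 8 * ε ≤ c * ((Fintype.card V : ℝ) ^ m * q ^ (m + 1))) :
    ∃ f, IsContainerMap H f (2 / ε * (q * Fintype.card V)) (α * Fintype.card V) := by
  obtain ⟨f, hf⟩ := exists_container (V := V) hq₀.le (by linarith) hε₀.le hε₁
    (edgeFree_antitone H)
  refine ⟨f, fun I hI => ?_⟩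
  obtain ⟨T, hTI, hIT, hT, hfT⟩ := hf I hI
  refine ⟨T, hTI, hIT, ?_, le_of_not_ge fun hlarge => ?_⟩
  · rw [div_mul_eq_mul_div, le_div_iff₀ hε₀, mul_comm]
    exact mul_le_of_one_sub_pow_le hq₀.le hq₁ hε₁ hT
  · have hjanson := hsat.binomPr_edgeFree_le hH hK hq₀.le (by linarith) hqn hKq hlarge
    have hlog := Real.log_le_log (Real.rpow_pos_of_pos (by linarith) _) (hfT.trans hjanson)
    rw [Real.log_rpow (by linarith), Real.log_exp] at hlog
    have hw : 0 < q * Fintype.card V := by linarith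
    have hlower := mul_le_mul_of_nonneg_left (neg_two_mul_le_log_one_sub hq₀.le hq₁)
      (show 0 ≤ ε * Fintype.card V by positivity)
    have hupper := mul_le_mul_of_nonneg_right hεq hw.le
    nlinarith

end Supersaturation

lemma pow_mul_rpow_neg_div_pow (m : ℕ) {x : ℝ} (hx : 0 < x) :
    x ^ m * (x ^ (-((m : ℝ) / (m + 1)))) ^ (m + 1) = 1 := by
  have hm : (m : ℝ) + 1 ≠ 0 := by positivity
  rw [← Real.rpow_natCast (x ^ _), ← Real.rpow_mul hx.le, ← Real.rpow_natCast, ← Real.rpow_add hx]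
  push_cast
  rw [neg_mul, div_mul_cancel₀ _ hm, add_neg_cancel, Real.rpow_zero]

lemma rpow_neg_div_mul (m : ℕ) {x : ℝ} (hx : 0 < x) :
    x ^ (-((m : ℝ) / (m + 1))) * x = x ^ (1 / ((m : ℝ) + 1)) := by
  have hm : (m : ℝ) + 1 ≠ 0 := by positivity
  rw [← Real.rpow_add_one hx.ne']
  congr 1
  field_simp
  ring

lemma Supersaturated.exists_isContainerMap (m : ℕ) {K c : ℝ} (hK : 0 < K) (hc : 0 < c) :
    ∃ κ B : ℝ, 0 < κ ∧ 0 < B ∧ ∀ {V : Type*} [Fintype V] [Nonempty V] {H : Finset (Finset V)}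
      {α : ℝ}, Supersaturated H m α c → BoundedCodegree H m K →
      1 ≤ κ * (Fintype.card V : ℝ) ^ (1 / ((m : ℝ) + 1)) →
      ∃ f, IsContainerMap H f (B * (Fintype.card V : ℝ) ^ (1 / ((m : ℝ) + 1)))
        (α * Fintype.card V) := by
  set κ : ℝ := min (1 / 2) (c / (2 ^ (m + 3) * K ^ 2))
  have hκ₀ : 0 < κ := by positivity
  have hκ₁ : κ ≤ 1 / 2 := min_le_left _ _
  have hκK : 2 ^ (m + 2) * K ^ 2 * κ ^ (m + 1) ≤ c / 2 := by
    have hpow : κ ^ (m + 1) ≤ κ := pow_le_of_le_one hκ₀.le (by linarith) m.succ_ne_zero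
    have hκ₂ : κ ^ (m + 1) ≤ c / (2 ^ (m + 3) * K ^ 2) := hpow.trans (min_le_right _ _)
    rw [le_div_iff₀ (by positivity), pow_succ _ (m + 2)] at hκ₂
    linarith
  set ε : ℝ := min (1 / 2) (c * κ ^ (m + 1) / 8)
  have hε₀ : 0 < ε := by positivity
  have hε₁ : ε < 1 := (min_le_left _ _).trans_lt (by norm_num)
  have hεκ : 8 * ε ≤ c * κ ^ (m + 1) := by
    have : ε ≤ c * κ ^ (m + 1) / 8 := min_le_right _ _
    linarith
  refine ⟨κ, 2 / ε * κ, hκ₀, by positivity, fun {V} _ _ {H α} hsat hH hκn => ?_⟩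
  have hn : (1 : ℝ) ≤ Fintype.card V := by exact_mod_cast Fintype.card_pos
  have hn₀ : (0 : ℝ) < Fintype.card V := by linarith
  set q := κ * (Fintype.card V : ℝ) ^ (-((m : ℝ) / (m + 1))) with hq
  have hqY : (Fintype.card V : ℝ) ^ m * q ^ (m + 1) = κ ^ (m + 1) := by
    rw [hq, mul_pow, mul_left_comm, pow_mul_rpow_neg_div_pow m hn₀, mul_one]
  have hqn : q * Fintype.card V = κ * (Fintype.card V : ℝ) ^ (1 / ((m : ℝ) + 1)) := by
    rw [hq, mul_assoc, rpow_neg_div_mul m hn₀]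
  have hq₁ : q ≤ 1 / 2 := (mul_le_of_le_one_right hκ₀.le
    (Real.rpow_le_one_of_one_le_of_nonpos hn (neg_nonpos.2 (by positivity)))).trans hκ₁
  rw [mul_assoc, ← hqn]
  exact hsat.exists_isContainerMap_of_density hH hK.le (by positivity) hq₁ (hqn ▸ hκn)
    (hqY ▸ hκK) hε₀ hε₁ (hqY ▸ hεκ)

theorem exists_tendsto_binomPr_hypergraphStable_one (m : ℕ) {K c δ : ℝ} (hK : 0 < K) (hc : 0 < c)
    (hδ₀ : 0 < δ) (hδ₁ : δ ≤ 1) :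
    ∃ c₁ : ℝ, 0 < c₁ ∧ ∀ {ι : Type*} {l : Filter ι} {V : ι → Type*} [∀ i, Fintype (V i)]
      {H : ∀ i, Finset (Finset (V i))} {p : ι → ℝ},
      Tendsto (fun i => (Fintype.card (V i) : ℝ)) l atTop →
      (∀ i, BoundedCodegree (H i) m K) → (∀ᶠ i in l, Supersaturated (H i) m (δ / 16) c) →
      (∀ i, 0 ≤ p i ∧ p i ≤ 1) →
      (∀ i, c₁ * (Fintype.card (V i) : ℝ) ^ (-((m : ℝ) / (m + 1))) ≤ p i) →
      Tendsto (fun i => binomPr (p i) univ (HypergraphStable δ (H i))) l (𝓝 1) := by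
  obtain ⟨κ, B, hκ, hB, hcont⟩ := Supersaturated.exists_isContainerMap m hK hc
  have hlog : 0 ≤ Real.log (1 / (δ / 8)) :=
    Real.log_nonneg ((one_le_div (by positivity)).2 (by linarith))
  set η := δ / 8 / (1 + Real.log (1 / (δ / 8))) with hη
  have hη₀ : 0 < η := by positivity
  refine ⟨B / η, by positivity, fun {ι l V _ H p} hV hH hsat hp hlow => ?_⟩
  have hroot : Tendsto (fun i => (Fintype.card (V i) : ℝ) ^ (1 / ((m : ℝ) + 1))) l atTop :=
    (tendsto_rpow_atTop (by positivity)).comp hV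
  have hpn : ∀ᶠ i in l, B / η * (Fintype.card (V i) : ℝ) ^ (1 / ((m : ℝ) + 1)) ≤
      p i * Fintype.card (V i) := by
    filter_upwards [hV.eventually_gt_atTop 0] with i hn
    rw [← rpow_neg_div_mul m hn, ← mul_assoc]
    exact mul_le_mul_of_nonneg_right (hlow i) hn.le
  have hlim : Tendsto (fun i => 1 - (4 + 8 / δ) / (p i * Fintype.card (V i))) l (𝓝 1) := by
    have := tendsto_atTop_mono' l hpn (hroot.const_mul_atTop (by positivity))
    simpa using (this.const_div_atTop (4 + 8 / δ)).const_sub 1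
  refine tendsto_of_tendsto_of_tendsto_of_le_of_le' hlim tendsto_const_nhds ?_
    (.of_forall fun i => binomPr_le_one (hp i).1 (hp i).2)
  filter_upwards [hV.eventually_gt_atTop 0, hpn, hsat, hroot.eventually_ge_atTop (1 / κ)]
    with i hn hpn hsat hκn
  have : Nonempty (V i) := Fintype.card_pos_iff.1 (by exact_mod_cast hn)
  have hp₀ : 0 < p i := (by positivity : (0 : ℝ) < _).trans_le (hlow i)
  obtain ⟨f, hf⟩ := hcont hsat (hH i) ((div_le_iff₀' hκ).1 hκn)
  have hfη : IsContainerMap (H i) f (η * (p i * Fintype.card (V i)))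
      (δ / 16 * Fintype.card (V i)) := fun I hI => by
    obtain ⟨T, hTI, hIT, hT, hfT⟩ := hf I hI
    refine ⟨T, hTI, hIT, hT.trans ?_, hfT⟩
    rwa [div_mul_eq_mul_div, div_le_iff₀' hη₀] at hpn
  linarith [hfη.binomPr_not_stable_le_div hp₀ (hp i).2 hδ₀ hδ₁
      (by rw [hη, div_mul_cancel₀ _ (by positivity)]),
    binomPr_add_not (p i) univ (HypergraphStable δ (H i))]

/-! ### Regularity -/

section Regularity

variable {W : Type*} {Γ : SimpleGraph W} {A B X Y : Finset W} {d b ε : ℝ}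

/-- A dense pair `(A, B)` of vertex sets of size at least `b` in which large subsets still span
a positive proportion of their pairs. -/
structure IsLowerRegular (Γ : SimpleGraph W) (d b : ℝ) (A B : Finset W) : Prop where
  le_card_left : b ≤ #A
  le_card_right : b ≤ #B
  le_card_interedges : ∀ X ⊆ A, ∀ Y ⊆ B, d / 4 * #A ≤ #X → d / 4 * #B ≤ #Y →
    d / 2 * (#X * #Y) ≤ #(Γ.interedges X Y)

lemma IsLowerRegular.symm (h : IsLowerRegular Γ d b A B) : IsLowerRegular Γ d b B A where
  le_card_left := h.le_card_right
  le_card_right := h.le_card_left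
  le_card_interedges X hX Y hY hXB hYA := by
    have hYX := h.le_card_interedges Y hY X hX hYA hXB
    have : Std.Symm Γ.Adj := Γ.symm
    rwa [mul_comm (#X : ℝ), SimpleGraph.interedges, Rel.card_interedges_comm X Y]

-- Only uniformity over subsets of `X` and `Y` is used, so these may be small pieces of the
-- uniform pair, as long as they occupy a fixed proportion of it.
lemma isLowerRegular_of_isUniform (hd₀ : 0 < d) (hd₁ : d ≤ 1) (hb : 0 < b)
    (hAB : Γ.IsUniform (d ^ 2 / 4) A B) (hXA : X ⊆ A) (hYB : Y ⊆ B) (hX : d * #A ≤ #X)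
    (hY : d * #B ≤ #Y) (hbX : b ≤ #X) (hbY : b ≤ #Y)
    (hXY : d * (#X * #Y) ≤ #(Γ.interedges X Y)) : IsLowerRegular Γ d b X Y := by
  have hlarge : ∀ {C Z Z' : Finset W}, d * #C ≤ #Z → d / 4 * #Z ≤ #Z' →
      (#C : ℝ) * (d ^ 2 / 4) ≤ #Z' := fun hZ hZ' => by nlinarith
  have hd₄ : d / 4 ≤ 1 := by linarith
  have hdense : d ≤ Γ.edgeDensity X Y := by
    rw [SimpleGraph.edgeDensity_def]
    push_cast
    have hX₀ := hb.trans_le hbX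
    have hY₀ := hb.trans_le hbY
    rwa [le_div_iff₀ (by positivity)]
  have hself := hAB hXA hYB
    (hlarge hX (mul_le_of_le_one_left (Nat.cast_nonneg _) hd₄))
    (hlarge hY (mul_le_of_le_one_left (Nat.cast_nonneg _) hd₄))
  refine ⟨hbX, hbY, fun X' hX' Y' hY' hcX hcY => ?_⟩
  have hsub := hAB (hX'.trans hXA) (hY'.trans hYB) (hlarge hX hcX) (hlarge hY hcY)
  have hX₀ : (0 : ℝ) < #X' := lt_of_lt_of_le (by have := hb.trans_le hbX; positivity) hcX
  have hY₀ : (0 : ℝ) < #Y' := lt_of_lt_of_le (by have := hb.trans_le hbY; positivity) hcY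
  have hdense' : d / 2 ≤ Γ.edgeDensity X' Y' := by
    rw [abs_lt] at hself hsub
    nlinarith
  rw [SimpleGraph.edgeDensity_def] at hdense'
  push_cast at hdense'
  rwa [le_div_iff₀ (by positivity)] at hdense'

lemma card_filter_card_fiber_lt_le {α β : Type*} (s : Finset α) (t : Finset β) {f : α → β}
    (hf : ∀ a ∈ s, f a ∈ t) {w : β → ℝ} (hw : ∀ b ∈ t, 0 ≤ w b) :
    (#{a ∈ s | (#{a' ∈ s | f a' = f a} : ℝ) < w (f a)} : ℝ) ≤ ∑ b ∈ t, w b := by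
  rw [card_eq_sum_card_fiberwise (fun a ha => hf a (mem_filter.1 ha).1), Nat.cast_sum]
  refine sum_le_sum fun b hb => ?_
  rcases lt_or_ge (#{a ∈ s | f a = b} : ℝ) (w b) with hlt | hge
  · refine le_trans ?_ hlt.le
    exact_mod_cast card_le_card (filter_subset_filter _ (filter_subset _ _))
  · rw [card_eq_zero.2, Nat.cast_zero]
    · exact hw b hb
    · simp only [filter_eq_empty_iff, mem_filter]
      rintro a ⟨-, ha⟩ rfl
      exact hge.not_gt ha

variable [Fintype W] (P : Finpartition (univ : Finset W))

lemma card_filter_card_part_inter_lt_le (hd : 0 ≤ d) (X : Finset W) :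
    (#{u ∈ X | (#(P.part u ∩ X) : ℝ) < d * #(P.part u)} : ℝ) ≤ d * Fintype.card W := by
  have hfiber := card_filter_card_fiber_lt_le X P.parts (f := P.part)
    (fun u _ => P.part_mem.2 (mem_univ u)) (w := fun U => d * #U) fun U _ => by positivity
  rw [← mul_sum, ← Nat.cast_sum, P.sum_card_parts, card_univ] at hfiber
  refine le_trans (le_of_eq ?_) hfiber
  congr! 6 with u
  ext v
  simp [P.mem_part_iff_part_eq_part (mem_univ v) (mem_univ u), and_comm]

lemma sum_card_inter_parts (X : Finset W) : ∑ U ∈ P.parts, #(U ∩ X) = #X := by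
  rw [card_eq_sum_card_fiberwise (f := P.part) (t := P.parts)
    fun u _ => P.part_mem.2 (mem_univ u)]
  refine sum_congr rfl fun U hU => congrArg card ?_
  ext v
  simp [P.part_eq_iff_mem hU, and_comm]

lemma card_filter_interedges_parts_lt_le (hd : 0 ≤ d) (Γ : SimpleGraph W) (X Y : Finset W) :
    (#{q ∈ Γ.interedges X Y | (#(Γ.interedges (P.part q.1 ∩ X) (P.part q.2 ∩ Y)) : ℝ) <
      d * (#(P.part q.1 ∩ X) * #(P.part q.2 ∩ Y))} : ℝ) ≤ d * (#X * #Y) := by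
  have hfiber := card_filter_card_fiber_lt_le (Γ.interedges X Y) (P.parts ×ˢ P.parts)
    (f := fun q => (P.part q.1, P.part q.2))
    (fun q _ => mem_product.2 ⟨P.part_mem.2 (mem_univ _), P.part_mem.2 (mem_univ _)⟩)
    (w := fun U => d * (#(U.1 ∩ X) * #(U.2 ∩ Y))) fun U _ => by positivity
  simp only [← mul_sum, sum_product, ← sum_mul, ← Nat.cast_sum, sum_card_inter_parts] at hfiber
  refine le_trans (le_of_eq ?_) hfiber
  congr! with q
  ext ⟨u, v⟩
  simp only [SimpleGraph.mem_interedges_iff, mem_inter, mem_filter, Prod.mk.injEq,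
    P.mem_part_iff_part_eq_part (mem_univ _) (mem_univ _)]
  tauto

lemma le_card_of_mem_parts_of_isEquipartition (hP : P.IsEquipartition) {N : ℕ}
    (hN : #P.parts ≤ N) {U : Finset W} (hU : U ∈ P.parts) :
    (Fintype.card W : ℝ) / (2 * N) ≤ #U := by
  have hparts : 0 < #P.parts := card_pos.2 ⟨U, hU⟩
  have hU₁ : 0 < #U := card_pos.2 (P.nonempty_of_mem_parts hU)
  have haverage := hP.average_le_card_part hU
  rw [card_univ] at haverage
  have hle : Fintype.card W ≤ 2 * N * #U :=
    calc Fintype.card W ≤ #P.parts * (Fintype.card W / #P.parts + 1) :=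
          (Nat.lt_mul_div_succ _ hparts).le
      _ ≤ N * (#U + #U) := Nat.mul_le_mul hN (Nat.add_le_add haverage hU₁)
      _ = 2 * N * #U := by ring
  rw [div_le_iff₀ (by have := hparts.trans_le hN; positivity)]
  calc (Fintype.card W : ℝ) ≤ 2 * N * #U := by exact_mod_cast hle
    _ = #U * (2 * N) := mul_comm _ _

lemma card_filter_part_eq_part_le (hP : P.IsEquipartition) (hε : 0 < ε)
    (hparts : 4 / ε ≤ #P.parts) (X Y : Finset W) :
    (#{q ∈ Γ.interedges X Y | P.part q.1 = P.part q.2} : ℝ) ≤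
      ε / 2 * (Fintype.card W : ℝ) ^ 2 := by
  refine le_trans ?_ (hP.card_biUnion_offDiag_le hε hparts)
  refine Nat.cast_le.2 (card_le_card fun q hq => ?_)
  obtain ⟨hq, hpart⟩ := mem_filter.1 hq
  refine mem_biUnion.2 ⟨P.part q.1, P.part_mem.2 (mem_univ _), mem_offDiag.2 ⟨?_, ?_, ?_⟩⟩
  · exact P.mem_part_self.2 (mem_univ _)
  · exact hpart ▸ P.mem_part_self.2 (mem_univ _)
  · exact ((SimpleGraph.mem_interedges_iff Γ).1 hq).2.2.ne

lemma card_filter_nonUniforms_le [Nonempty W] (hP : P.IsEquipartition) (hε : 0 < ε)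
    (hΓ : P.IsUniform Γ ε) (s : Finset (W × W)) :
    (#{q ∈ s | (P.part q.1, P.part q.2) ∈ P.nonUniforms Γ ε} : ℝ) ≤
      4 * ε * (Fintype.card W : ℝ) ^ 2 := by
  refine le_trans ?_ (hP.sum_nonUniforms_lt univ_nonempty hε hΓ).le
  refine Nat.cast_le.2 (card_le_card fun q hq => mem_biUnion.2 ⟨_, (mem_filter.1 hq).2, ?_⟩)
  exact mem_product.2 ⟨P.mem_part_self.2 (mem_univ _), P.mem_part_self.2 (mem_univ _)⟩

lemma isLowerRegular_part_inter (hd₀ : 0 < d) (hd₁ : d ≤ 1) (hP : P.IsEquipartition) {N : ℕ}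
    (hN : 0 < N) (hPN : #P.parts ≤ N) {u v : W} (huv : P.part u ≠ P.part v)
    (hΓ : (P.part u, P.part v) ∉ P.nonUniforms Γ (d ^ 2 / 4))
    (hX : d * #(P.part u) ≤ #(P.part u ∩ X)) (hY : d * #(P.part v) ≤ #(P.part v ∩ Y))
    (hXY : d * (#(P.part u ∩ X) * #(P.part v ∩ Y)) ≤
      #(Γ.interedges (P.part u ∩ X) (P.part v ∩ Y))) :
    IsLowerRegular Γ d (d / (2 * N) * Fintype.card W) (P.part u ∩ X) (P.part v ∩ Y) := by
  have hpart : ∀ w, P.part w ∈ P.parts := fun w => P.part_mem.2 (mem_univ w)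
  have : Nonempty W := ⟨u⟩
  have : 0 < Fintype.card W := Fintype.card_pos
  have hlarge : ∀ {w} {Z : Finset W}, d * #(P.part w) ≤ #(P.part w ∩ Z) →
      d / (2 * N) * Fintype.card W ≤ #(P.part w ∩ Z) := fun {w Z} hZ => by
    refine le_trans ?_ hZ
    rw [div_mul_eq_mul_div, mul_div_assoc]
    exact mul_le_mul_of_nonneg_left
      (le_card_of_mem_parts_of_isEquipartition P hP hPN (hpart w)) hd₀.le
  have hunif : Γ.IsUniform (d ^ 2 / 4) (P.part u) (P.part v) := by
    by_contra hirregular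
    exact hΓ ((P.mk_mem_nonUniforms ..).2 ⟨hpart u, hpart v, huv, hirregular⟩)
  exact isLowerRegular_of_isUniform hd₀ hd₁ (by positivity) hunif inter_subset_left
    inter_subset_left hX hY (hlarge hX) (hlarge hY) hXY

lemma card_filter_not_isLowerRegular_le [Nonempty W] (hd₀ : 0 < d) (hd₁ : d ≤ 1)
    (hP : P.IsEquipartition) {N : ℕ} (hN : 0 < N) (hPN : #P.parts ≤ N)
    (hparts : 4 / (d ^ 2 / 4) ≤ #P.parts) (hΓ : P.IsUniform Γ (d ^ 2 / 4)) (X Y : Finset W) :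
    (#{q ∈ Γ.interedges X Y | ¬IsLowerRegular Γ d (d / (2 * N) * Fintype.card W)
      (P.part q.1 ∩ X) (P.part q.2 ∩ Y)} : ℝ) ≤ 5 * d * (Fintype.card W : ℝ) ^ 2 := by
  set n := Fintype.card W
  set bad := {q ∈ Γ.interedges X Y | ¬IsLowerRegular Γ d (d / (2 * N) * n)
    (P.part q.1 ∩ X) (P.part q.2 ∩ Y)}
  set diagonal := {q ∈ Γ.interedges X Y | P.part q.1 = P.part q.2}
  set irregular :=
    {q ∈ Γ.interedges X Y | (P.part q.1, P.part q.2) ∈ P.nonUniforms Γ (d ^ 2 / 4)}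
  set smallX := {u ∈ X | (#(P.part u ∩ X) : ℝ) < d * #(P.part u)}
  set smallY := {v ∈ Y | (#(P.part v ∩ Y) : ℝ) < d * #(P.part v)}
  set sparse := {q ∈ Γ.interedges X Y |
    (#(Γ.interedges (P.part q.1 ∩ X) (P.part q.2 ∩ Y)) : ℝ) <
      d * (#(P.part q.1 ∩ X) * #(P.part q.2 ∩ Y))}
  have hcover : bad ⊆ diagonal ∪ (irregular ∪ (smallX ×ˢ univ ∪ (univ ×ˢ smallY ∪ sparse))) := by
    intro q hq
    obtain ⟨hq, hbad⟩ := mem_filter.1 hq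
    contrapose! hbad
    obtain ⟨hqX, hqY, -⟩ := (SimpleGraph.mem_interedges_iff Γ).1 hq
    simp only [diagonal, irregular, smallX, smallY, sparse, mem_union, mem_filter, mem_product,
      mem_univ, hq, hqX, hqY, true_and, and_true, not_or, not_lt] at hbad
    obtain ⟨hne, hunif, hX, hY, hdense⟩ := hbad
    exact isLowerRegular_part_inter P hd₀ hd₁ hP hN hPN hne hunif hX hY hdense
  have hunion :
      (#bad : ℝ) ≤ #diagonal + (#irregular + (#smallX * n + (n * #smallY + #sparse))) := by
    have hle := (card_le_card hcover).trans <|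
      (card_union_le _ _).trans <| Nat.add_le_add_left ((card_union_le _ _).trans <|
      Nat.add_le_add_left ((card_union_le _ _).trans <|
      Nat.add_le_add_left (card_union_le _ _) _) _) _
    rw [card_product, card_product, card_univ] at hle
    exact_mod_cast hle
  have hdiagonal : (#diagonal : ℝ) ≤ d ^ 2 / 4 / 2 * (n : ℝ) ^ 2 :=
    card_filter_part_eq_part_le P hP (by positivity) hparts X Y
  have hirregular : (#irregular : ℝ) ≤ 4 * (d ^ 2 / 4) * (n : ℝ) ^ 2 :=
    card_filter_nonUniforms_le P hP (by positivity) hΓ _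
  have hsmallX : (#smallX : ℝ) * n ≤ d * n * n :=
    mul_le_mul_of_nonneg_right (card_filter_card_part_inter_lt_le P hd₀.le X) n.cast_nonneg
  have hsmallY : n * (#smallY : ℝ) ≤ n * (d * n) :=
    mul_le_mul_of_nonneg_left (card_filter_card_part_inter_lt_le P hd₀.le Y) n.cast_nonneg
  have hsparse : (#sparse : ℝ) ≤ d * (n * n) :=
    (card_filter_interedges_parts_lt_le P hd₀.le Γ X Y).trans (by gcongr <;> exact card_le_univ _)
  have hdn : d ^ 2 * (n : ℝ) ^ 2 ≤ d * (n : ℝ) ^ 2 :=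
    mul_le_mul_of_nonneg_right (pow_le_of_le_one hd₀.le hd₁ two_ne_zero) (sq_nonneg _)
  have : 0 ≤ d * (n : ℝ) ^ 2 := by positivity
  linarith

theorem exists_finpartition_isLowerRegular (hd₀ : 0 < d) (hd₁ : d ≤ 1) :
    ∃ β : ℝ, 0 < β ∧ ∃ n₀ : ℕ, ∀ {W : Type*} [Fintype W], n₀ ≤ Fintype.card W →
      ∀ Γ : SimpleGraph W, ∃ P : Finpartition (univ : Finset W), ∀ X Y : Finset W,
        (#{q ∈ Γ.interedges X Y | ¬IsLowerRegular Γ d (β * Fintype.card W)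
          (P.part q.1 ∩ X) (P.part q.2 ∩ Y)} : ℝ) ≤ 5 * d * (Fintype.card W : ℝ) ^ 2 := by
  set l : ℕ := ⌈4 / (d ^ 2 / 4)⌉₊
  have hbound : 0 < SzemerediRegularity.bound (d ^ 2 / 4) l := SzemerediRegularity.bound_pos _ _
  refine ⟨d / (2 * SzemerediRegularity.bound (d ^ 2 / 4) l), by positivity, l,
    fun {W} _ hW Γ => ?_⟩
  have : Nonempty W :=
    Fintype.card_pos_iff.1 ((Nat.ceil_pos.2 (by positivity)).trans_le hW)
  obtain ⟨P, hP, hlP, hPN, hPΓ⟩ := szemeredi_regularity Γ (ε := d ^ 2 / 4) (by positivity) hW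
  exact ⟨P, card_filter_not_isLowerRegular_le P hd₀ hd₁ hP hbound hPN
    ((Nat.le_ceil _).trans (by exact_mod_cast hlP)) hPΓ⟩

end Regularity

/-! ### Closed walks through lower-regular pairs -/

section Walks

variable {W : Type*} {Γ : SimpleGraph W} {A B C X : Finset W} {d b M : ℝ} {a : W}

/-- The number of walks `a, v₁, …, vᵢ = v` in `Γ` with `vⱼ ∈ A j` for `0 < j < i`, provided that
`a ∈ A 0`. -/
noncomputable def walkCount (Γ : SimpleGraph W) (A : ℕ → Finset W) (a : W) : ℕ → W → ℕ
  | 0, v => if v = a then 1 else 0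
  | i + 1, v => ∑ u ∈ A i with Γ.Adj u v, walkCount Γ A a i u

lemma IsLowerRegular.card_lowDegree_lt (hd : 0 < d) (hb : 0 < b) (h : IsLowerRegular Γ d b A B)
    (hXA : X ⊆ A) (hX : d / 4 * #A ≤ #X) :
    (#{w ∈ B | (#{v ∈ X | Γ.Adj v w} : ℝ) < d / 2 * #X} : ℝ) < d / 4 * #B := by
  set Y := {w ∈ B | (#{v ∈ X | Γ.Adj v w} : ℝ) < d / 2 * #X}
  by_contra! hY
  have hB : (0 : ℝ) < #B := hb.trans_le h.le_card_right
  have hY₀ : (0 : ℝ) < #Y := lt_of_lt_of_le (by positivity) hY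
  have hdense := h.le_card_interedges X hXA Y (filter_subset _ _) hX hY
  have hdegrees : #(Γ.interedges X Y) = ∑ w ∈ Y, #{v ∈ X | Γ.Adj v w} := by
    simp only [SimpleGraph.interedges_def, card_filter, sum_product_right]
  have hlow : ∑ w ∈ Y, (#{v ∈ X | Γ.Adj v w} : ℝ) < ∑ w ∈ Y, d / 2 * #X :=
    sum_lt_sum_of_nonempty (card_pos.1 (by exact_mod_cast hY₀)) fun w hw => (mem_filter.1 hw).2
  rw [sum_const, nsmul_eq_mul] at hlow
  rw [hdegrees, Nat.cast_sum] at hdense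
  linarith

lemma exists_highDegree_of_isLowerRegular (hd₀ : 0 < d) (hd₁ : d ≤ 1) (hb : 0 < b)
    (hB : IsLowerRegular Γ d b B A) (hC : IsLowerRegular Γ d b C A) :
    ∃ a ∈ A, d / 2 * #B ≤ #{v ∈ B | Γ.Adj v a} ∧ d / 2 * #C ≤ #{v ∈ C | Γ.Adj v a} := by
  have hlow : ∀ {Z : Finset W}, IsLowerRegular Γ d b Z A →
      (#{w ∈ A | (#{v ∈ Z | Γ.Adj v w} : ℝ) < d / 2 * #Z} : ℝ) < d / 4 * #A := fun h =>
    h.card_lowDegree_lt hd₀ hb subset_rfl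
      (mul_le_of_le_one_left (Nat.cast_nonneg _) (by linarith))
  by_contra! hcon
  have hcover : A ⊆ {w ∈ A | (#{v ∈ B | Γ.Adj v w} : ℝ) < d / 2 * #B} ∪
      {w ∈ A | (#{v ∈ C | Γ.Adj v w} : ℝ) < d / 2 * #C} := fun w hw => by
    rw [← filter_or, mem_filter]
    exact ⟨hw, (lt_or_ge _ _).imp_right (hcon w hw)⟩
  have hcard : (#A : ℝ) ≤ _ := Nat.cast_le.2 ((card_le_card hcover).trans (card_union_le _ _))
  have hA : (0 : ℝ) < #A := hb.trans_le hB.le_card_right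
  rw [Nat.cast_add] at hcard
  nlinarith [hlow hB, hlow hC]

lemma IsLowerRegular.card_heavy_le (hd : 0 < d) (hb : 0 < b) (h : IsLowerRegular Γ d b A B)
    {f : W → ℝ} (hf : ∀ v, 0 ≤ f v) (hM : 0 ≤ M) (hheavy : d / 4 * #A ≤ #{v ∈ A | M ≤ f v}) :
    (1 - d / 4) * #B ≤
      #{w ∈ B | M * (d / 2 * (d / 4 * b)) ≤ ∑ v ∈ A with Γ.Adj v w, f v} := by
  set X := {v ∈ A | M ≤ f v}
  have hlow := h.card_lowDegree_lt hd hb (filter_subset _ _) hheavy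
  have hX : d / 4 * b ≤ #X :=
    (mul_le_mul_of_nonneg_left h.le_card_left (by positivity)).trans hheavy
  have hcover : B ⊆ {w ∈ B | (#{v ∈ X | Γ.Adj v w} : ℝ) < d / 2 * #X} ∪
      {w ∈ B | M * (d / 2 * (d / 4 * b)) ≤ ∑ v ∈ A with Γ.Adj v w, f v} := by
    intro w hw
    rw [← filter_or, mem_filter]
    refine ⟨hw, (lt_or_ge _ _).imp_right fun hdeg => ?_⟩
    calc M * (d / 2 * (d / 4 * b)) ≤ M * #{v ∈ X | Γ.Adj v w} := by
          gcongr
          exact (mul_le_mul_of_nonneg_left hX (by positivity)).trans hdeg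
      _ = ∑ v ∈ X with Γ.Adj v w, M := by rw [sum_const, nsmul_eq_mul, mul_comm]
      _ ≤ ∑ v ∈ X with Γ.Adj v w, f v :=
          sum_le_sum fun v hv => (mem_filter.1 (mem_filter.1 hv).1).2
      _ ≤ ∑ v ∈ A with Γ.Adj v w, f v :=
          sum_le_sum_of_subset_of_nonneg (filter_subset_filter _ (filter_subset _ _))
            fun v _ _ => hf v
  have hcard : (#B : ℝ) ≤ _ := Nat.cast_le.2 ((card_le_card hcover).trans (card_union_le _ _))
  rw [Nat.cast_add] at hcard
  linarith

lemma card_walkCount_ge (hd₀ : 0 < d) (hd₁ : d ≤ 1) (hb : 0 < b) {A : ℕ → Finset W} (ha : a ∈ A 0)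
    (hdeg : d / 2 * #(A 1) ≤ #{v ∈ A 1 | Γ.Adj v a}) {n : ℕ}
    (hA : ∀ j < n, IsLowerRegular Γ d b (A (j + 1)) (A (j + 2))) {i : ℕ} (hi : i < n) :
    (1 - d / 4) * #(A (i + 2)) ≤
      #{v ∈ A (i + 2) | (d / 2 * (d / 4 * b)) ^ (i + 1) ≤ walkCount Γ A a (i + 2) v} := by
  have hstep : ∀ j < n, d / 4 * #(A (j + 1)) ≤
        #{v ∈ A (j + 1) | (d / 2 * (d / 4 * b)) ^ j ≤ walkCount Γ A a (j + 1) v} →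
      (1 - d / 4) * #(A (j + 2)) ≤
        #{v ∈ A (j + 2) | (d / 2 * (d / 4 * b)) ^ (j + 1) ≤ walkCount Γ A a (j + 2) v} := by
    intro j hj hheavy
    refine ((hA j hj).card_heavy_le hd₀ hb (fun v => Nat.cast_nonneg _) (by positivity)
      hheavy).trans (le_of_eq ?_)
    simp only [walkCount, Nat.cast_sum, pow_succ]
  induction i with
  | zero =>
    refine hstep 0 hi ?_
    calc d / 4 * (#(A 1) : ℝ) ≤ d / 2 * #(A 1) := by gcongr; norm_num
      _ ≤ _ := hdeg
      _ ≤ _ := by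
        refine Nat.cast_le.2 (card_le_card fun v hv => ?_)
        obtain ⟨hv, hav⟩ := mem_filter.1 hv
        refine mem_filter.2 ⟨hv, ?_⟩
        have hone : 1 ≤ walkCount Γ A a 1 v := by
          rw [walkCount, sum_filter]
          exact le_trans (by simp [walkCount, hav.symm]) (single_le_sum_of_canonicallyOrdered ha)
        simpa using hone
  | succ i ih =>
    refine hstep (i + 1) hi (le_trans ?_ (ih (by omega)))
    gcongr
    linarith

theorem exists_le_walkCount_self (hd₀ : 0 < d) (hd₁ : d ≤ 1) (hb : 0 < b) (n : ℕ)
    {A : ℕ → Finset W} (hclosed : A (n + 3) = A 0)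
    (hA : ∀ j < n + 3, IsLowerRegular Γ d b (A j) (A (j + 1))) :
    ∃ a ∈ A 0, d / 4 * b * (d / 2 * (d / 4 * b)) ^ (n + 1) ≤ walkCount Γ A a (n + 3) a := by
  set q := d / 2 * (d / 4 * b)
  have hlast : IsLowerRegular Γ d b (A (n + 2)) (A 0) := hclosed ▸ hA (n + 2) (by omega)
  obtain ⟨a, ha, hfirst_deg, hlast_deg⟩ :=
    exists_highDegree_of_isLowerRegular hd₀ hd₁ hb (hA 0 (by omega)).symm hlast
  refine ⟨a, ha, ?_⟩
  set X := {v ∈ A (n + 2) | q ^ (n + 1) ≤ walkCount Γ A a (n + 2) v}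
  have hheavy : (1 - d / 4) * #(A (n + 2)) ≤ #X :=
    card_walkCount_ge hd₀ hd₁ hb ha hfirst_deg (fun j hj => hA (j + 1) (by omega)) n.lt_succ_self
  have hsplit : #{v ∈ A (n + 2) | Γ.Adj v a} ≤ #{v ∈ X | Γ.Adj v a} + #(A (n + 2) \ X) := by
    refine (card_le_card fun v hv => ?_).trans (card_union_le _ _)
    obtain ⟨hv, hva⟩ := mem_filter.1 hv
    by_cases hvX : v ∈ X
    · exact mem_union_left _ (mem_filter.2 ⟨hvX, hva⟩)
    · exact mem_union_right _ (mem_sdiff.2 ⟨hv, hvX⟩)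
  have hreturn : d / 4 * b ≤ #{v ∈ X | Γ.Adj v a} := by
    have hcompl := cast_card_sdiff (R := ℝ) (filter_subset _ _ : X ⊆ A (n + 2))
    have hsplit' : (#{v ∈ A (n + 2) | Γ.Adj v a} : ℝ) ≤ _ := Nat.cast_le.2 hsplit
    rw [Nat.cast_add, hcompl] at hsplit'
    have := mul_le_mul_of_nonneg_left hlast.le_card_left (by positivity : 0 ≤ d / 4)
    linarith
  calc d / 4 * b * q ^ (n + 1) ≤ #{v ∈ X | Γ.Adj v a} * q ^ (n + 1) := by gcongr
    _ = ∑ v ∈ X with Γ.Adj v a, q ^ (n + 1) := by rw [sum_const, nsmul_eq_mul]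
    _ ≤ ∑ v ∈ X with Γ.Adj v a, (walkCount Γ A a (n + 2) v : ℝ) :=
        sum_le_sum fun v hv => (mem_filter.1 (mem_filter.1 hv).1).2
    _ ≤ ∑ v ∈ A (n + 2) with Γ.Adj v a, (walkCount Γ A a (n + 2) v : ℝ) :=
        sum_le_sum_of_subset_of_nonneg (filter_subset_filter _ (filter_subset _ _))
          fun v _ _ => Nat.cast_nonneg _
    _ = walkCount Γ A a (n + 3) a := by rw [walkCount, Nat.cast_sum]

end Walks

/-! ### Supersaturation in groups -/

section Supersaturation

variable {G : Type*} [Group G] {n : ℕ} {T : Finset G} {r : Fin (n + 3) → ℕ}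

/-- The representations `x₀ ^ r 0 * ⋯ * xᵢ₋₁ ^ r (i - 1) = g` with all `xⱼ` in `T`. -/
noncomputable def powerReps [Fintype G] (T : Finset G) (r : ℕ → ℕ) (i : ℕ) (g : G) :
    Finset (Fin i → G) :=
  {x | (∀ j, x j ∈ T) ∧ ((List.finRange i).map fun j => x j ^ r j).prod = g}

lemma sum_card_powerReps_le [Fintype G] (r : ℕ → ℕ) (i : ℕ) (g : G) :
    ∑ x ∈ T, #(powerReps T r i (g * (x ^ r i)⁻¹)) ≤ #(powerReps T r (i + 1) g) := by
  rw [← card_sigma]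
  refine card_le_card_of_injOn (fun q => Fin.snoc q.2 q.1) (fun q hq => ?_) ?_
  · obtain ⟨hx, hq⟩ := mem_sigma.1 hq
    simp only [powerReps, mem_filter_univ] at hq
    simp only [powerReps, coe_filter, mem_univ, true_and, Set.mem_ofPred_eq, Fin.forall_fin_succ',
      List.finRange_succ_last, List.map_append, List.prod_append, List.map_map]
    simpa [Function.comp_def, hx] using ⟨hq.1, by rw [hq.2, inv_mul_cancel_right]⟩
  · rintro ⟨x, y⟩ - ⟨x', y'⟩ - h
    obtain ⟨rfl, rfl⟩ := Fin.snoc_injective2 h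
    rfl

/-- The graph on `n + 3` cyclically arranged copies of `G` in which `a` in copy `i` is joined to
`a * x ^ r i` in copy `i + 1` for every `x ∈ T`. -/
def layeredCayleyGraph (T : Finset G) (r : Fin (n + 3) → ℕ) : SimpleGraph (Fin (n + 3) × G) :=
  SimpleGraph.fromRel fun u v => v.1 = u.1 + 1 ∧ ∃ x ∈ T, x ^ r u.1 = u.2⁻¹ * v.2

lemma layeredCayleyGraph_adj_succ {i : Fin (n + 3)} {a b : G} :
    (layeredCayleyGraph T r).Adj (i, a) (i + 1, b) ↔ ∃ x ∈ T, x ^ r i = a⁻¹ * b := by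
  have hone : (1 : Fin (n + 3)) ≠ 0 := by simp
  have htwo : (1 + 1 : Fin (n + 3)) ≠ 0 := by
    simp [Fin.ext_iff, Fin.val_add, Nat.mod_eq_of_lt (by omega : 2 < n + 3)]
  simp [layeredCayleyGraph, SimpleGraph.fromRel_adj, hone, htwo, add_assoc]

lemma ofNat_succ (j : ℕ) : Fin.ofNat (n + 3) (j + 1) = Fin.ofNat (n + 3) j + 1 := by
  ext
  simp [Fin.val_add]

lemma sum_adj_layeredCayleyGraph_le {i : Fin (n + 3)} {s : Finset (Fin (n + 3) × G)} {b : G}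
    (hi : ∀ u ∈ s, u.1 = i) (hadj : ∀ u ∈ s, (layeredCayleyGraph T r).Adj u (i + 1, b))
    (f : G → ℕ) : ∑ u ∈ s, f u.2 ≤ ∑ x ∈ T, f (b * (x ^ r i)⁻¹) := by
  have hlabel : ∀ u ∈ s, ∃ x ∈ T, x ^ r i = u.2⁻¹ * b := fun u hu =>
    layeredCayleyGraph_adj_succ.1 (hi u hu ▸ hadj u hu)
  choose! label hlabelT hlabel using hlabel
  have hinj : Set.InjOn label s := fun u hu u' hu' h => by
    refine Prod.ext ((hi u hu).trans (hi u' hu').symm)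
      (inv_injective (mul_right_cancel (b := b) ?_))
    rw [← hlabel u hu, ← hlabel u' hu', h]
  calc ∑ u ∈ s, f u.2 = ∑ u ∈ s, f (b * (label u ^ r i)⁻¹) :=
        sum_congr rfl fun u hu => by rw [hlabel u hu]; group
    _ = ∑ x ∈ s.image label, f (b * (x ^ r i)⁻¹) := by rw [sum_image hinj]
    _ ≤ ∑ x ∈ T, f (b * (x ^ r i)⁻¹) := sum_le_sum_of_subset (image_subset_iff.2 hlabelT)

lemma walkCount_layeredCayleyGraph_le [Fintype G] {A : ℕ → Finset (Fin (n + 3) × G)}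
    (hA : ∀ j, ∀ v ∈ A j, v.1 = Fin.ofNat (n + 3) j) (a : Fin (n + 3) × G) (i : ℕ) (b : G) :
    walkCount (layeredCayleyGraph T r) A a i (Fin.ofNat (n + 3) i, b) ≤
      #(powerReps T (fun j => r (Fin.ofNat (n + 3) j)) i (a.2⁻¹ * b)) := by
  induction i generalizing b with
  | zero =>
    rw [walkCount]
    split_ifs with h
    · subst h
      simp [powerReps]
    · exact Nat.zero_le _
  | succ i ih =>
    set ρ : ℕ → ℕ := fun j => r (Fin.ofNat (n + 3) j)
    set s := {u ∈ A i | (layeredCayleyGraph T r).Adj u (Fin.ofNat (n + 3) (i + 1), b)}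
    have hs : ∀ u ∈ s, u.1 = Fin.ofNat (n + 3) i := fun u hu => hA i u (mem_filter.1 hu).1
    calc walkCount (layeredCayleyGraph T r) A a (i + 1) (Fin.ofNat (n + 3) (i + 1), b)
        = ∑ u ∈ s, walkCount (layeredCayleyGraph T r) A a i u := rfl
      _ ≤ ∑ u ∈ s, #(powerReps T ρ i (a.2⁻¹ * u.2)) :=
          sum_le_sum fun u hu => by simpa only [← hs u hu] using ih u.2
      _ ≤ ∑ x ∈ T, #(powerReps T ρ i (a.2⁻¹ * (b * (x ^ ρ i)⁻¹))) :=
          sum_adj_layeredCayleyGraph_le hs (fun u hu => ofNat_succ (n := n) i ▸ (mem_filter.1 hu).2)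
            fun g => #(powerReps T ρ i (a.2⁻¹ * g))
      _ ≤ #(powerReps T ρ (i + 1) (a.2⁻¹ * b)) := by
          simpa only [mul_assoc] using sum_card_powerReps_le (T := T) ρ i (a.2⁻¹ * b)

/-- The `j`-th vertex of the closed walk in `layeredCayleyGraph T r` that starts at `g` and uses
the same element `x ∈ T` in every step. -/
def constantWalk (r : Fin (n + 3) → ℕ) (g x : G) (j : ℕ) : Fin (n + 3) × G :=
  (Fin.ofNat (n + 3) j, g * x ^ ∑ i ∈ range j, r (Fin.ofNat (n + 3) i))

lemma constantWalk_eq_zero (hexp : Monoid.exponent G ∣ ∑ j, r j) (g x : G) :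
    constantWalk r g x (n + 3) = constantWalk r g x 0 := by
  have hsum : ∑ i ∈ range (n + 3), r (Fin.ofNat (n + 3) i) = ∑ j, r j := by
    rw [sum_range]
    exact sum_congr rfl fun i _ => congrArg r (Fin.ext (Nat.mod_eq_of_lt i.2))
  obtain ⟨t, ht⟩ := hexp
  refine Prod.ext (Fin.ext (by simp [constantWalk])) ?_
  simp only [constantWalk, hsum, ht, pow_mul, Monoid.pow_exponent_eq_one, one_pow, range_zero,
    sum_empty, pow_zero]

lemma constantWalk_pair_injective [Fintype G] (hcop : ∀ j, (r j).Coprime (Fintype.card G))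
    (j : ℕ) : Function.Injective fun q : G × G =>
      (constantWalk r q.1 q.2 j, constantWalk r q.1 q.2 (j + 1)) := by
  rintro ⟨g, x⟩ ⟨g', x'⟩ h
  simp only [constantWalk, Prod.mk.injEq, true_and, sum_range_succ, pow_add, ← mul_assoc] at h
  obtain ⟨hj, hsucc⟩ := h
  rw [hj] at hsucc
  have hcard : (Nat.card G).Coprime (r (Fin.ofNat (n + 3) j)) := by
    rw [Nat.card_eq_fintype_card]
    exact (hcop _).symm
  obtain rfl : x = x' := (powCoprime hcard).injective (mul_left_cancel hsucc)
  rw [mul_right_cancel hj]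

lemma constantWalk_adj_succ (r : Fin (n + 3) → ℕ) (g : G) {x : G} (hx : x ∈ T) (j : ℕ) :
    (layeredCayleyGraph T r).Adj (constantWalk r g x j) (constantWalk r g x (j + 1)) := by
  rw [constantWalk, constantWalk, ofNat_succ, layeredCayleyGraph_adj_succ]
  exact ⟨x, hx, by rw [sum_range_succ, pow_add]; group⟩

lemma exists_constantWalk_forall [Fintype G] (hcop : ∀ j, (r j).Coprime (Fintype.card G))
    {Good : ℕ → (Fin (n + 3) × G) × (Fin (n + 3) × G) → Prop} {D : ℝ}
    (hfew : ∀ j, (#{e ∈ (layeredCayleyGraph T r).interedges ({Fin.ofNat (n + 3) j} ×ˢ univ)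
      ({Fin.ofNat (n + 3) (j + 1)} ×ˢ univ) | ¬Good j e} : ℝ) ≤ D)
    (hD : (n + 3) * D < Fintype.card G * #T) :
    ∃ g x, ∀ j < n + 3, Good j (constantWalk r g x j, constantWalk r g x (j + 1)) := by
  set bad : ℕ → Finset (G × G) := fun j =>
    {q ∈ univ ×ˢ T | ¬Good j (constantWalk r q.1 q.2 j, constantWalk r q.1 q.2 (j + 1))}
  have hbad : ∀ j, (#(bad j) : ℝ) ≤ D := by
    refine fun j => le_trans (Nat.cast_le.2 ?_) (hfew j)
    refine card_le_card_of_injOn _ (fun q hq => ?_) (constantWalk_pair_injective hcop j).injOn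
    obtain ⟨hq, hqbad⟩ := mem_filter.1 hq
    refine mem_filter.2 ⟨(SimpleGraph.mem_interedges_iff _).2 ⟨?_, ?_, ?_⟩, hqbad⟩
    · simp [constantWalk]
    · simp [constantWalk]
    · exact constantWalk_adj_succ r q.1 (mem_product.1 hq).2 j
  by_contra! hcon
  have hcover : univ ×ˢ T ⊆ (range (n + 3)).biUnion bad := fun q hq => by
    obtain ⟨j, hj, hqbad⟩ := hcon q.1 q.2
    exact mem_biUnion.2 ⟨j, mem_range.2 hj, mem_filter.2 ⟨hq, hqbad⟩⟩
  refine hD.not_ge ?_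
  calc (Fintype.card G : ℝ) * #T = #(univ ×ˢ T : Finset (G × G)) := by
        rw [card_product, card_univ, Nat.cast_mul]
    _ ≤ ∑ j ∈ range (n + 3), (#(bad j) : ℝ) := by
        exact_mod_cast (card_le_card hcover).trans card_biUnion_le
    _ ≤ ∑ _j ∈ range (n + 3), D := sum_le_sum fun j _ => hbad j
    _ = (n + 3) * D := by simp

lemma le_card_powerReps_one_of_isLowerRegular [Fintype G] {d b : ℝ} (hd₀ : 0 < d) (hd₁ : d ≤ 1)
    (hb : 0 < b) {A : ℕ → Finset (Fin (n + 3) × G)}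
    (hlayer : ∀ j, ∀ v ∈ A j, v.1 = Fin.ofNat (n + 3) j) (hclosed : A (n + 3) = A 0)
    (hA : ∀ j < n + 3, IsLowerRegular (layeredCayleyGraph T r) d b (A j) (A (j + 1))) :
    d / 4 * b * (d / 2 * (d / 4 * b)) ^ (n + 1) ≤
      #(powerReps T (fun j => r (Fin.ofNat (n + 3) j)) (n + 3) 1) := by
  obtain ⟨⟨_, a⟩, ha, hwalks⟩ := exists_le_walkCount_self hd₀ hd₁ hb n hclosed hA
  obtain rfl := hlayer (n + 3) _ (hclosed ▸ ha)
  have hreps := walkCount_layeredCayleyGraph_le (T := T) (r := r) hlayer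
    (Fin.ofNat (n + 3) (n + 3), a) (n + 3) a
  rw [inv_mul_cancel] at hreps
  exact hwalks.trans (Nat.cast_le.2 hreps)

theorem exists_le_card_powerReps_one (n : ℕ) {δ : ℝ} (hδ : 0 < δ) :
    ∃ c : ℝ, 0 < c ∧ ∃ n₀ : ℕ, ∀ {G : Type*} [Group G] [Fintype G], n₀ ≤ Fintype.card G →
      ∀ r : Fin (n + 3) → ℕ, (∀ j, (r j).Coprime (Fintype.card G)) →
      Monoid.exponent G ∣ ∑ j, r j → ∀ T : Finset G, δ * Fintype.card G ≤ #T →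
      c * (Fintype.card G : ℝ) ^ (n + 2) ≤
        #(powerReps T (fun j => r (Fin.ofNat (n + 3) j)) (n + 3) 1) := by
  set k : ℝ := n + 3 with hk
  have hk₀ : 0 < k := by positivity
  set d : ℝ := min 1 (δ / (10 * k ^ 3))
  have hd₀ : 0 < d := lt_min one_pos (by positivity)
  have hd₁ : d ≤ 1 := min_le_left _ _
  have hdδ : d * (10 * k ^ 3) ≤ δ := (le_div_iff₀ (by positivity)).1 (min_le_right _ _)
  obtain ⟨β, hβ, n₀, hregular⟩ := exists_finpartition_isLowerRegular hd₀ hd₁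
  refine ⟨d / 4 * (β * k) * (d / 2 * (d / 4 * (β * k))) ^ (n + 1), by positivity, n₀, ?_⟩
  intro G _ _ hG r hcop hexp T hT
  have hG₀ : (0 : ℝ) < Fintype.card G := Nat.cast_pos.2 Fintype.card_pos
  have hcard : (Fintype.card (Fin (n + 3) × G) : ℝ) = k * Fintype.card G := by simp [hk]
  obtain ⟨P, hP⟩ := hregular (hG.trans (Fintype.card_le_of_surjective Prod.snd Prod.snd_surjective))
    (layeredCayleyGraph T r)
  rw [hcard] at hP
  set layer : ℕ → Finset (Fin (n + 3) × G) := fun j => {Fin.ofNat (n + 3) j} ×ˢ univ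
  have hfew : (n + 3) * (5 * d * (k * Fintype.card G) ^ 2) < Fintype.card G * #T :=
    calc (n + 3) * (5 * d * (k * Fintype.card G) ^ 2)
        = d * (10 * k ^ 3) / 2 * (Fintype.card G : ℝ) ^ 2 := by rw [hk]; ring
      _ ≤ δ / 2 * (Fintype.card G : ℝ) ^ 2 := by gcongr
      _ < Fintype.card G * (δ * Fintype.card G) := by nlinarith [mul_pos hδ (pow_pos hG₀ 2)]
      _ ≤ Fintype.card G * #T := by gcongr
  obtain ⟨g, x, hgood⟩ :=
    exists_constantWalk_forall hcop (fun j => hP (layer j) (layer (j + 1))) hfew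
  let : DecidableEq (Fin (n + 3) × G) := Classical.typeDecidableEq _
  set A : ℕ → Finset (Fin (n + 3) × G) := fun j => P.part (constantWalk r g x j) ∩ layer j
  have hclosed : A (n + 3) = A 0 := by
    simp only [A, layer, constantWalk_eq_zero hexp]
    rw [show Fin.ofNat (n + 3) (n + 3) = Fin.ofNat (n + 3) 0 from Fin.ext (by simp)]
  have hreps := le_card_powerReps_one_of_isLowerRegular hd₀ hd₁ (by positivity)
    (fun j v hv => mem_singleton.1 (mem_product.1 (mem_inter.1 hv).2).1) hclosed hgood
  refine le_trans (le_of_eq ?_) hreps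
  clear_value k d
  ring

end Supersaturation

/-! ### The hypergraph of solutions -/

section Solutions

variable {ι V : Type*} {S : Finset (ι → V)}

/-- Every element of `S` is determined by any choice of all but one of its coordinates. -/
def DeterminedByOthers (S : Finset (ι → V)) : Prop :=
  ∀ x ∈ S, ∀ y ∈ S, ∀ l, (∀ j ≠ l, x j = y j) → x = y

lemma determinedByOthers_of_prod_pow {k : ℕ} {G : Type*} [Group G] [Fintype G] {r : Fin k → ℕ}
    {g : G} (hcop : ∀ j, (r j).Coprime (Fintype.card G)) {S : Finset (Fin k → G)}
    (hS : ∀ x ∈ S, ((List.finRange k).map fun j => x j ^ r j).prod = g) :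
    DeterminedByOthers S := by
  intro x hx y hy l hxy
  obtain ⟨s, t, hst⟩ := List.append_of_mem (List.mem_finRange l)
  have hnodup := List.nodup_middle.1 (hst ▸ List.nodup_finRange k)
  have hother : ∀ j ∈ s ++ t, x j ^ r j = y j ^ r j := fun j hj => by
    rw [hxy j fun h => (List.nodup_cons.1 hnodup).1 (h ▸ hj)]
  have hprod := (hS x hx).trans (hS y hy).symm
  simp only [hst, List.map_append, List.map_cons, List.prod_append, List.prod_cons] at hprod
  rw [List.map_congr_left fun j hj => hother j (List.mem_append_left t hj),
    List.map_congr_left fun j hj => hother j (List.mem_append_right s hj)] at hprod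
  have hcard : (Nat.card G).Coprime (r l) := by
    rw [Nat.card_eq_fintype_card]
    exact (hcop l).symm
  have hl : x l = y l := (powCoprime hcard).injective (mul_right_cancel (mul_left_cancel hprod))
  funext j
  by_cases hj : j = l
  · rw [hj, hl]
  · exact hxy j hj

section Counting

variable [Fintype ι] [Fintype V]

lemma DeterminedByOthers.card_le (hS : DeterminedByOthers S) {B : Finset (ι → V)} (hBS : B ⊆ S)
    {I : Finset ι} {l : ι} (hl : l ∉ I)
    (hI : ∀ x ∈ B, ∀ y ∈ B, (∀ j ∉ I, j ≠ l → x j = y j) → ∀ j ∈ I, x j = y j) :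
    #B ≤ Fintype.card V ^ (Fintype.card ι - (#I + 1)) := by
  set J := (univ \ I).erase l
  have hJ : #J = Fintype.card ι - (#I + 1) := by
    rw [card_erase_of_mem (mem_sdiff.2 ⟨mem_univ l, hl⟩), card_univ_sdiff, Nat.sub_sub]
  rw [← hJ, ← Fintype.card_coe J, ← Fintype.card_fun, ← card_univ]
  refine card_le_card_of_injOn (fun x (j : J) => x j) (fun _ _ => mem_coe.2 (mem_univ _)) ?_
  intro x hx y hy hxy
  have houtside : ∀ j ∉ I, j ≠ l → x j = y j := fun j hj hjl =>
    congrFun hxy ⟨j, mem_erase.2 ⟨hjl, mem_sdiff.2 ⟨mem_univ j, hj⟩⟩⟩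
  refine hS x (hBS hx) y (hBS hy) l fun j hjl => ?_
  by_cases hj : j ∈ I
  · exact hI x hx y hy houtside j hj
  · exact houtside j hj hjl

lemma DeterminedByOthers.card_filter_not_injective_le (hS : DeterminedByOthers S)
    (hι : 2 < Fintype.card ι) :
    #{x ∈ S | ¬Function.Injective x} ≤
      Fintype.card ι ^ 2 * Fintype.card V ^ (Fintype.card ι - 2) := by
  have hcover : {x ∈ S | ¬Function.Injective x} ⊆
      ({q : ι × ι | q.1 ≠ q.2} : Finset _).biUnion fun q => {x ∈ S | x q.1 = x q.2} := by
    intro x hx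
    obtain ⟨hxS, hx⟩ := mem_filter.1 hx
    obtain ⟨i, j, hij, hne⟩ := Function.not_injective_iff.1 hx
    exact mem_biUnion.2 ⟨(i, j), mem_filter.2 ⟨mem_univ _, hne⟩, mem_filter.2 ⟨hxS, hij⟩⟩
  have hpair : ∀ q ∈ ({q : ι × ι | q.1 ≠ q.2} : Finset _),
      #{x ∈ S | x q.1 = x q.2} ≤ Fintype.card V ^ (Fintype.card ι - 2) := by
    rintro ⟨i, j⟩ hq
    have hij : i ≠ j := (mem_filter.1 hq).2
    obtain ⟨l, hl⟩ : ∃ l, l ∉ ({i, j} : Finset ι) := by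
      by_contra! h
      exact hι.not_ge ((card_le_card fun l _ => h l).trans card_le_two)
    rw [mem_insert, mem_singleton, not_or] at hl
    refine hS.card_le (filter_subset _ _) (I := {i}) (notMem_singleton.2 hl.1) ?_
    intro x hx y hy hxy a ha
    rw [mem_singleton.1 ha, (mem_filter.1 hx).2, (mem_filter.1 hy).2]
    exact hxy j (notMem_singleton.2 hij.symm) (Ne.symm hl.2)
  refine (card_le_card hcover).trans ((card_biUnion_le_card_mul _ _ _ hpair).trans ?_)
  gcongr
  exact (card_le_univ _).trans (by rw [Fintype.card_prod, sq])

lemma DeterminedByOthers.card_filter_subset_image_le (hS : DeterminedByOthers S) {T : Finset V}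
    (hT : #T < Fintype.card ι) :
    #{x ∈ S | T ⊆ univ.image x} ≤
      Fintype.card ι ^ Fintype.card ι * Fintype.card V ^ (Fintype.card ι - (#T + 1)) := by
  have hcover : {x ∈ S | T ⊆ univ.image x} ⊆
      (univ : Finset (T → ι)).biUnion fun f => {x ∈ S | ∀ v : T, x (f v) = (v : V)} := by
    intro x hx
    obtain ⟨hxS, hTx⟩ := mem_filter.1 hx
    choose f _ hf using fun v : T => mem_image.1 (hTx v.2)
    exact mem_biUnion.2 ⟨f, mem_univ f, mem_filter.2 ⟨hxS, hf⟩⟩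
  have hpositions : ∀ f ∈ (univ : Finset (T → ι)),
      #{x ∈ S | ∀ v : T, x (f v) = (v : V)} ≤ Fintype.card V ^ (Fintype.card ι - (#T + 1)) := by
    intro f _
    obtain hempty | ⟨x, hx⟩ :=
      ({x ∈ S | ∀ v : T, x (f v) = (v : V)} : Finset _).eq_empty_or_nonempty
    · rw [hempty]
      exact Nat.zero_le _
    have hf : Function.Injective f := fun v w h =>
      Subtype.ext (by rw [← (mem_filter.1 hx).2 v, ← (mem_filter.1 hx).2 w, h])
    have hfT : #(univ.image f) = #T := by
      rw [card_image_of_injective _ hf, card_univ, Fintype.card_coe]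
    obtain ⟨l, -, hl⟩ := exists_mem_notMem_of_card_lt_card (hfT.trans_lt hT)
    rw [← hfT]
    refine hS.card_le (filter_subset _ _) hl fun x hx y hy _ j hj => ?_
    obtain ⟨v, -, rfl⟩ := mem_image.1 hj
    rw [(mem_filter.1 hx).2, (mem_filter.1 hy).2]
  refine (card_le_card hcover).trans ((card_biUnion_le_card_mul _ _ _ hpositions).trans ?_)
  rw [card_univ, Fintype.card_fun, Fintype.card_coe]
  gcongr
  exact (Nat.zero_le _).trans_lt hT

end Counting

section Hypergraph

variable {k m : ℕ} {G : Type} {S : Finset (Fin k → G)}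

/-- The hypergraph whose edges are the sets of entries of the members of `S` with pairwise distinct
entries. -/
noncomputable def solutionHypergraph (S : Finset (Fin k → G)) : Finset (Finset G) :=
  (distinctPart S).image fun x => univ.image x

lemma exists_mem_solutionHypergraph_subset {X : Finset G} :
    (∃ E ∈ solutionHypergraph S, E ⊆ X) ↔ ∃ x ∈ distinctPart S, ∀ j, x j ∈ X := by
  simp only [solutionHypergraph, exists_mem_image, image_subset_iff, mem_univ, true_imp_iff]

lemma stableK_iff_hypergraphStable {δ : ℝ} {A : Finset G} :
    StableK δ S A ↔ HypergraphStable δ (solutionHypergraph S) A := by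
  simp only [StableK, HypergraphStable, exists_mem_solutionHypergraph_subset]
  refine forall₃_congr fun X _ _ => and_iff_right_of_imp ?_
  exact fun ⟨x, hx, hxX⟩ => ⟨x, (mem_filter.1 hx).1, hxX⟩

lemma binomProb_filter_stableK [Fintype G] (p δ : ℝ) (S : Finset (Fin k → G)) :
    binomProb p {A : Finset G | StableK δ S A} =
      binomPr p univ (HypergraphStable δ (solutionHypergraph S)) := by
  rw [binomProb, binomPr, binomExp, sum_filter, powerset_univ, card_univ]
  simp only [stableK_iff_hypergraphStable, mul_ite, mul_one, mul_zero]

lemma boundedCodegree_solutionHypergraph [Fintype G] {S : Finset (Fin (m + 2) → G)}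
    (hS : DeterminedByOthers S) :
    BoundedCodegree (solutionHypergraph S) m ((m + 2 : ℝ) ^ (m + 2)) where
  card_eq E hE := by
    obtain ⟨x, hx, rfl⟩ := mem_image.1 hE
    rw [card_image_of_injective _ (mem_filter.1 hx).2, card_univ, Fintype.card_fin]
  codegree_le T hT := by
    have hedges : {E ∈ solutionHypergraph S | T ⊆ E} ⊆
        ({x ∈ S | T ⊆ univ.image x} : Finset _).image fun x => univ.image x := by
      intro E hE
      obtain ⟨hE, hTE⟩ := mem_filter.1 hE
      obtain ⟨x, hx, rfl⟩ := mem_image.1 hE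
      exact mem_image_of_mem _ (mem_filter.2 ⟨(mem_filter.1 hx).1, hTE⟩)
    have hcount := (card_le_card hedges).trans <| card_image_le.trans <|
      hS.card_filter_subset_image_le (T := T) (by rw [Fintype.card_fin]; omega)
    rw [Fintype.card_fin, show m + 2 - (#T + 1) = m + 1 - #T by omega] at hcount
    exact_mod_cast hcount

lemma card_distinctPart_filter_le (S : Finset (Fin k → G)) (C : Finset G) :
    #{x ∈ distinctPart S | ∀ j, x j ∈ C} ≤ k ^ k * #(edgesIn (solutionHypergraph S) C) := by
  refine card_le_mul_card_image_of_maps_to (f := fun x => univ.image x) (fun x hx => ?_) _ ?_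
  · obtain ⟨hx, hxC⟩ := mem_filter.1 hx
    exact mem_edgesIn.2 ⟨mem_image_of_mem _ hx, image_subset_iff.2 fun j _ => hxC j⟩
  intro E hE
  obtain ⟨y, hy, rfl⟩ := mem_image.1 (mem_edgesIn.1 hE).1
  have hsub : {x ∈ {x ∈ distinctPart S | ∀ j, x j ∈ C} | univ.image x = univ.image y} ⊆
      Fintype.piFinset fun _ => univ.image y := fun x hx =>
    Fintype.mem_piFinset.2 fun j => (mem_filter.1 hx).2 ▸ mem_image_of_mem x (mem_univ j)
  refine (card_le_card hsub).trans (le_of_eq ?_)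
  rw [Fintype.card_piFinset_const, card_image_of_injective _ (mem_filter.1 hy).2, card_univ,
    Fintype.card_fin]

theorem exists_supersaturated_solutionHypergraph (n : ℕ) {α : ℝ} (hα : 0 < α) :
    ∃ c : ℝ, 0 < c ∧ ∃ n₀ : ℝ, ∀ {G : Type} [Group G] [Fintype G], n₀ ≤ Fintype.card G →
      ∀ r : Fin (n + 3) → ℕ, (∀ j, (r j).Coprime (Fintype.card G)) →
      Monoid.exponent G ∣ ∑ j, r j → ∀ S : Finset (Fin (n + 3) → G),
      (∀ x, x ∈ S ↔ ((List.finRange (n + 3)).map fun j => x j ^ r j).prod = 1) →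
      Supersaturated (solutionHypergraph S) (n + 1) α c := by
  obtain ⟨c, hc, n₀, hreps⟩ := exists_le_card_powerReps_one n hα
  set k : ℝ := n + 3 with hk
  have : 0 < k := by positivity
  refine ⟨c / (2 * k ^ (n + 3)), by positivity, max n₀ (2 * k ^ 2 / c), ?_⟩
  intro G _ _ hG r hcop hexp S hS C hC
  set N := Fintype.card G
  have hsolutions : powerReps C (fun j => r (Fin.ofNat (n + 3) j)) (n + 3) 1 ⊆
      {x ∈ distinctPart S | ∀ j, x j ∈ C} ∪ {x ∈ S | ¬Function.Injective x} := by
    intro x hx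
    have hx' : (∀ j, x j ∈ C) ∧ x ∈ S := by
      rw [hS]
      simpa [powerReps] using hx
    by_cases hinj : Function.Injective x
    · exact mem_union_left _ (mem_filter.2 ⟨mem_filter.2 ⟨hx'.2, hinj⟩, hx'.1⟩)
    · exact mem_union_right _ (mem_filter.2 ⟨hx'.2, hinj⟩)
  have hdegenerate := (determinedByOthers_of_prod_pow hcop fun x hx =>
    (hS x).1 hx).card_filter_not_injective_le (by rw [Fintype.card_fin]; omega)
  rw [Fintype.card_fin, show n + 3 - 2 = n + 1 from rfl] at hdegenerate
  have hcount : c * (N : ℝ) ^ (n + 2) ≤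
      k ^ (n + 3) * #(edgesIn (solutionHypergraph S) C) + k ^ 2 * (N : ℝ) ^ (n + 1) := by
    refine (hreps (Nat.cast_le.1 ((le_max_left _ _).trans hG)) r hcop hexp C hC).trans ?_
    rw [hk]
    exact_mod_cast (card_le_card hsolutions).trans <| (card_union_le _ _).trans <|
      add_le_add (card_distinctPart_filter_le S C) hdegenerate
  have hsmall : 2 * (k ^ 2 * (N : ℝ) ^ (n + 1)) ≤ c * (N : ℝ) ^ (n + 2) :=
    calc 2 * (k ^ 2 * (N : ℝ) ^ (n + 1)) = 2 * k ^ 2 * (N : ℝ) ^ (n + 1) := by ring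
      _ ≤ N * c * (N : ℝ) ^ (n + 1) :=
          mul_le_mul_of_nonneg_right ((div_le_iff₀ hc).1 ((le_max_right _ _).trans hG))
            (by positivity)
      _ = c * (N : ℝ) ^ (n + 2) := by ring
  rw [div_mul_eq_mul_div, div_le_iff₀ (by positivity)]
  linarith

end Hypergraph

end Solutions

/-! ### The threshold -/

lemma mul_pow_mul_pow_le_of_lt_mul_rpow (m : ℕ) {x p K c ε : ℝ} (hx : 0 < x) (hK : 0 ≤ K)
    (hc : c ≤ 1) (hKc : K * c ≤ ε) (hp₀ : 0 ≤ p) (hp : p < c * x ^ (-((m : ℝ) / (m + 1)))) :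
    K * (x ^ m * p ^ (m + 1)) ≤ ε := by
  set t := x ^ (-((m : ℝ) / (m + 1)))
  have ht₀ : 0 < t := Real.rpow_pos_of_pos hx _
  have hc₀ : 0 ≤ c := (pos_of_mul_pos_left (hp₀.trans_lt hp) ht₀.le).le
  calc K * (x ^ m * p ^ (m + 1)) ≤ K * (x ^ m * (c * t) ^ (m + 1)) := by gcongr
    _ = K * (c ^ (m + 1) * (x ^ m * t ^ (m + 1))) := by rw [mul_pow, mul_left_comm (x ^ m)]
    _ = K * c ^ (m + 1) := by rw [pow_mul_rpow_neg_div_pow m hx, mul_one]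
    _ ≤ K * c := mul_le_mul_of_nonneg_left (pow_le_of_le_one hc₀ hc m.succ_ne_zero) hK
    _ ≤ ε := hKc

theorem stmt15_general (k : ℕ) (hk : 3 ≤ k) (δ : ℝ) (hδ0 : 0 < δ) (hδ1 : δ < 1) :
    ∃ c₁ c₂ : ℝ, 0 < c₁ ∧ 0 < c₂ ∧
      ∀ (r : Fin k → ℕ) (G : ℕ → Type) [∀ i, Fintype (G i)] [∀ i, Group (G i)],
      Tendsto (fun i => (Fintype.card (G i) : ℝ)) atTop atTop →
      (∀ i, Monoid.exponent (G i) ∣ ∑ j, r j) →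
      (∀ i j, Nat.Coprime (r j) (Fintype.card (G i))) →
      ∀ S : ∀ i, Finset (Fin k → G i),
      (∀ i (x : Fin k → G i), x ∈ S i ↔
        ((List.finRange k).map (fun j => x j ^ r j)).prod = 1) →
      ∀ p : ℕ → ℝ, (∀ i, 0 ≤ p i ∧ p i ≤ 1) →
        ((∀ i, c₁ * (Fintype.card (G i) : ℝ) ^ (-(((k:ℝ)-2)/((k:ℝ)-1))) ≤ p i) →
          Tendsto (fun i => binomProb (p i)
              (Finset.univ.filter (fun A : Finset (G i) => StableK δ (S i) A)))
            atTop (nhds 1)) ∧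
        ((∀ i, p i < c₂ * (Fintype.card (G i) : ℝ) ^ (-(((k:ℝ)-2)/((k:ℝ)-1)))) →
          Tendsto (fun i => binomProb (p i)
              (Finset.univ.filter (fun A : Finset (G i) => StableK δ (S i) A)))
            atTop (nhds 0)) := by
  obtain ⟨n, rfl⟩ := Nat.exists_eq_add_of_le' hk
  set K : ℝ := ((n + 1 : ℕ) + 2 : ℝ) ^ (n + 1 + 2)
  have hK : 0 < K := by positivity
  obtain ⟨c, hc, n₀, hsuper⟩ :=
    exists_supersaturated_solutionHypergraph n (α := δ / 16) (by positivity)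
  obtain ⟨c₁, hc₁, hone⟩ := exists_tendsto_binomPr_hypergraphStable_one (n + 1) hK hc hδ0 hδ1.le
  have hexponent : -(((n + 3 : ℕ) - 2 : ℝ) / ((n + 3 : ℕ) - 1)) =
      -(((n + 1 : ℕ) : ℝ) / ((n + 1 : ℕ) + 1)) := by
    push_cast
    congr 2 <;> ring
  set c₂ := min 1 ((1 - δ) / 4 / K)
  refine ⟨c₁, c₂, hc₁, lt_min one_pos (div_pos (by linarith) hK), ?_⟩
  intro r G _ _ hG hexp hcop S hS p hp
  have hcodegree : ∀ i, BoundedCodegree (solutionHypergraph (S i)) (n + 1) K := fun i =>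
    boundedCodegree_solutionHypergraph
      (determinedByOthers_of_prod_pow (hcop i) fun x hx => (hS i x).1 hx)
  have hsupersaturated : ∀ᶠ i in atTop,
      Supersaturated (solutionHypergraph (S i)) (n + 1) (δ / 16) c :=
    (hG.eventually_ge_atTop n₀).mono fun i hi => hsuper hi r (hcop i) (hexp i) (S i) (hS i)
  simp only [binomProb_filter_stableK, hexponent]
  refine ⟨hone hG hcodegree hsupersaturated hp, fun hp₂ => ?_⟩
  refine tendsto_binomPr_hypergraphStable_zero hG hcodegree hK.le hδ0.le hδ1 hp fun i => ?_
  exact mul_pow_mul_pow_le_of_lt_mul_rpow (n + 1) (Nat.cast_pos.2 Fintype.card_pos) hK.le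
    (min_le_left _ _) ((mul_comm _ _).trans_le ((le_div_iff₀ hK).1 (min_le_right _ _)))
    (hp i).1 (hp₂ i)

/-- threshold for the `(δ,S_i)_k`-stability of binomial random subsets with
respect to the equation `x_1^{r_1} ⋯ x_k^{r_k} = e` in finite (possibly non-abelian) groups. -/
theorem stmt15 (k : ℕ) (hk : 3 ≤ k) (r : Fin k → ℕ) (hr : ∀ j, 0 < r j)
    (G : ℕ → Type) [∀ i, Fintype (G i)] [∀ i, Group (G i)]
    (hG : Tendsto (fun i => (Fintype.card (G i) : ℝ)) atTop atTop)
    (hexp : ∀ i, Monoid.exponent (G i) ∣ ∑ j, r j)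
    (hcop : ∀ i j, Nat.Coprime (r j) (Fintype.card (G i)))
    (S : ∀ i, Finset (Fin k → G i))
    (hS : ∀ i (x : Fin k → G i), x ∈ S i ↔
      ((List.finRange k).map (fun j => x j ^ r j)).prod = 1)
    (δ : ℝ) (hδ0 : 0 < δ) (hδ : δ ≤ 1/40) :
    ∃ c₁ c₂ : ℝ, 0 < c₁ ∧ 0 < c₂ ∧
      ∀ p : ℕ → ℝ, (∀ i, 0 ≤ p i ∧ p i ≤ 1) →
        ((∀ i, c₁ * (Fintype.card (G i) : ℝ) ^ (-(((k:ℝ)-2)/((k:ℝ)-1))) ≤ p i) →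
          Tendsto (fun i => binomProb (p i)
              (Finset.univ.filter (fun A : Finset (G i) => StableK δ (S i) A)))
            atTop (nhds 1)) ∧
        ((∀ i, p i < c₂ * (Fintype.card (G i) : ℝ) ^ (-(((k:ℝ)-2)/((k:ℝ)-1)))) →
          Tendsto (fun i => binomProb (p i)
              (Finset.univ.filter (fun A : Finset (G i) => StableK δ (S i) A)))
            atTop (nhds 0)) := by
  obtain ⟨c₁, c₂, hc₁, hc₂, h⟩ := stmt15_general k hk δ hδ0 (by linarith)
  exact ⟨c₁, c₂, hc₁, hc₂, h r G hG hexp hcop S hS⟩
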